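/- arXiv:1902.00188 — 3 statements merged into one kernel-verified Lean document; each statement's English description precedes it below -/
import Mathlib

section
/- If the critical point c of a tent map T is recurrent with infinite orbit, then the set of endpoints of the core inverse limit space X′ is uncountable; moreover it has no isolated points and is dense in the set of folding points. -/
open Set Filter Topology

/-- The inverse limit `lim←(K, T)`, as the space of backward orbits. -/
abbrev InvLim (T : ℝ → ℝ) (K : Set ℝ) :=
  {x : ℕ → ℝ // (∀ n, x n ∈ K) ∧ ∀ n, T (x (n + 1)) = x n}

/-- A point `x` is an endpoint if for any two subcontinua `A`, `B` containing `x`,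
either `A ⊆ B` or `B ⊆ A`. -/
def IsEndpointPt {Z : Type*} [TopologicalSpace Z] (x : Z) : Prop :=
  ∀ A B : Set Z, IsCompact A → IsConnected A → IsCompact B → IsConnected B →
    x ∈ A → x ∈ B → A ⊆ B ∨ B ⊆ A

/-- The ω-limit set of `c` under `T`. -/
def omegaSet (T : ℝ → ℝ) (c : ℝ) : Set ℝ :=
  {y | ∃ φ : ℕ → ℕ, StrictMono φ ∧
    Filter.Tendsto (fun n => T^[φ n] c) Filter.atTop (nhds y)}

theorem omega_iff (T : ℝ → ℝ) (c y : ℝ) :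
    y ∈ omegaSet T c ↔ MapClusterPt y atTop (fun n => T^[n] c) := by
  constructor
  · rintro ⟨φ, hφ, h⟩
    exact MapClusterPt.of_comp hφ.tendsto_atTop (Filter.Tendsto.mapClusterPt h)
  · intro h
    obtain ⟨φ, hφ, h⟩ := h.tendsto_subseq
    exact ⟨φ, hφ, h⟩

theorem omega_closed (T : ℝ → ℝ) (c : ℝ) : IsClosed (omegaSet T c) := by
  have : omegaSet T c = {y | ClusterPt y (map (fun n => T^[n] c) atTop)} := by
    ext y
    exact omega_iff T c y
  rw [this]
  exact isClosed_setOfPred_clusterPt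

theorem omega_map {T : ℝ → ℝ} (hT : Continuous T) {c y : ℝ} (hy : y ∈ omegaSet T c) :
    T y ∈ omegaSet T c := by
  obtain ⟨φ, hφ, h⟩ := hy
  refine ⟨fun n => φ n + 1, fun a b hab => by simpa using hφ hab, ?_⟩
  simp only [Function.iterate_succ_apply']
  exact (hT.tendsto y).comp h

theorem omega_surj {T : ℝ → ℝ} (hT : Continuous T) {c y : ℝ} {K : Set ℝ} (hK : IsCompact K)
    (hcK : ∀ n, T^[n] c ∈ K) (hy : y ∈ omegaSet T c) :
    ∃ z ∈ omegaSet T c, T z = y := by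
  obtain ⟨φ, hφ, h⟩ := hy
  obtain ⟨z, -, ψ, hψ, hz⟩ := hK.tendsto_subseq (x := fun n => T^[φ (n+1) - 1] c) (fun n => hcK _)
  have key : ∀ n, φ (n+1) - 1 + 1 = φ (n+1) := fun n => by
    have := hφ (Nat.lt_succ_self n)
    simp only [Nat.succ_eq_add_one] at this
    omega
  refine ⟨z, ⟨fun n => φ (ψ n + 1) - 1, fun a b hab => ?_, hz⟩, ?_⟩
  · have h1 := hφ (Nat.succ_lt_succ (hψ hab))
    have h2 := key (ψ a)
    have h3 := key (ψ b)
    simp only [Nat.succ_eq_add_one] at h1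
    show φ (ψ a + 1) - 1 < φ (ψ b + 1) - 1
    omega
  · have h1 := (hT.tendsto z).comp hz
    have h2 : Tendsto (fun n => T^[φ (ψ n + 1)] c) atTop (𝓝 y) :=
      h.comp ((tendsto_add_atTop_nat 1).comp hψ.tendsto_atTop)
    refine tendsto_nhds_unique h1 (h2.congr fun n => ?_)
    simp only [Function.comp]
    rw [← Function.iterate_succ_apply' T, Nat.succ_eq_add_one, key]

theorem invlim_iter {T : ℝ → ℝ} {K : Set ℝ} (x : InvLim T K) (n k : ℕ) :
    T^[k] (x.1 (n + k)) = x.1 n := by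
  induction k with
  | zero => rfl
  | succ k ih => rw [Function.iterate_succ_apply, ← add_assoc, x.2.2, ih]

theorem invlim_iter' {T : ℝ → ℝ} {K : Set ℝ} (x : InvLim T K) {n m : ℕ} (h : n ≤ m) :
    T^[m - n] (x.1 m) = x.1 n := by
  have := invlim_iter x n (m - n)
  rwa [Nat.add_sub_cancel' h] at this

/-- Cylinder neighbourhoods. -/
theorem invlim_nhds {T : ℝ → ℝ} (hT : Continuous T) {K : Set ℝ} (z : InvLim T K)
    {O : Set (InvLim T K)} (hO : O ∈ 𝓝 z) :
    ∃ N, ∃ V ∈ 𝓝 (z.1 N), ∀ w : InvLim T K, w.1 N ∈ V → w ∈ O := by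
  rw [nhds_subtype_eq_comap, mem_comap] at hO
  obtain ⟨S, hS, hSO⟩ := hO
  rw [nhds_pi, Filter.mem_pi] at hS
  obtain ⟨I, hI, t, ht, hIt⟩ := hS
  obtain ⟨N, hN⟩ := hI.bddAbove
  refine ⟨N, ⋂ i ∈ I, (T^[N - i]) ⁻¹' t i, ?_, ?_⟩
  · rw [biInter_mem hI]
    intro i hi
    apply (hT.iterate (N - i)).continuousAt.preimage_mem_nhds
    rw [invlim_iter' z (hN hi)]
    exact ht i
  · intro w hw
    apply hSO
    apply hIt
    intro i hi
    have := mem_iInter₂.1 hw i hi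
    rw [mem_preimage, invlim_iter' w (hN hi)] at this
    exact this

theorem subset_of_proj {T : ℝ → ℝ} (hT : Continuous T) {K : Set ℝ} {A B : Set (InvLim T K)}
    (hB : IsClosed B)
    (h : ∀ n, ∀ a ∈ A, ∃ b ∈ B, b.1 n = a.1 n) : A ⊆ B := by
  intro a ha
  rw [← hB.closure_eq, mem_closure_iff_nhds]
  intro O hO
  obtain ⟨N, V, hV, hVO⟩ := invlim_nhds hT a hO
  obtain ⟨b, hb, hba⟩ := h N a ha
  exact ⟨b, hVO b (hba ▸ mem_of_mem_nhds hV), hb⟩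

theorem iter_lip {T : ℝ → ℝ} {s : ℝ} (hs : 0 ≤ s) (hL : ∀ x y, |T x - T y| ≤ s * |x - y|)
    (k : ℕ) (x y : ℝ) : |T^[k] x - T^[k] y| ≤ s ^ k * |x - y| := by
  induction k generalizing x y with
  | zero => simp
  | succ k ih =>
    rw [Function.iterate_succ_apply, Function.iterate_succ_apply]
    calc _ ≤ s ^ k * |T x - T y| := ih _ _
      _ ≤ s ^ k * (s * |x - y|) := by gcongr; exact hL x y
      _ = _ := by ring

theorem near_imp_subset {T : ℝ → ℝ} (hT : Continuous T) {s : ℝ} (hs : 1 ≤ s)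
    (hL : ∀ x y, |T x - T y| ≤ s * |x - y|) {K : Set ℝ} {A B : Set (InvLim T K)}
    (hB : IsCompact B)
    (h : ∀ M : ℕ, ∀ ε > 0, ∃ m ≥ M, ∀ a ∈ A, ∃ b ∈ B, s ^ m * |a.1 m - b.1 m| ≤ ε) : A ⊆ B := by
  apply subset_of_proj hT hB.isClosed
  intro n a ha
  have hc : IsClosed ((fun b : InvLim T K => b.1 n) '' B) :=
    (hB.image ((continuous_apply n).comp continuous_subtype_val)).isClosed
  have : a.1 n ∈ (fun b : InvLim T K => b.1 n) '' B := by
    rw [← hc.closure_eq, Metric.mem_closure_iff]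
    intro ε hε
    obtain ⟨m, hm, hab⟩ := h n (ε / 2) (by positivity)
    obtain ⟨b, hb, hb'⟩ := hab a ha
    refine ⟨_, mem_image_of_mem _ hb, ?_⟩
    rw [Real.dist_eq]
    rw [← invlim_iter' a hm, ← invlim_iter' b hm]
    have h1 := iter_lip (by linarith) hL (m - n) (a.1 m) (b.1 m)
    have h2 : s ^ (m - n) ≤ s ^ m := pow_le_pow_right₀ hs (Nat.sub_le _ _)
    have h3 : s ^ (m - n) * |a.1 m - b.1 m| ≤ s ^ m * |a.1 m - b.1 m| := by gcongr
    linarith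
  exact this

/-- Sufficient condition for an endpoint. -/
theorem endpoint_of_close {T : ℝ → ℝ} (hT : Continuous T) {s : ℝ} (hs : 1 ≤ s)
    (hL : ∀ x y, |T x - T y| ≤ s * |x - y|) {K : Set ℝ} {c1 : ℝ} (hK : ∀ y ∈ K, y ≤ c1)
    (x : InvLim T K)
    (h : ∀ j : ℕ, ∃ m ≥ j, s ^ m * (c1 - x.1 m) < 1 / ((j : ℝ) + 1)) : IsEndpointPt x := by
  intro A B hA hA' hB hB' hxA hxB
  have hcont : ∀ n, Continuous (fun b : InvLim T K => b.1 n) := fun n =>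
    (continuous_apply n).comp continuous_subtype_val
  -- one comparison step
  have step : ∀ C D : Set (InvLim T K), IsConnected D → x ∈ D → ∀ m,
      (∀ a ∈ C, a.1 m ≤ x.1 m → a.1 m ∈ (fun b : InvLim T K => b.1 m) '' D) →
      ∀ a ∈ C, ∃ b ∈ D, s ^ m * |a.1 m - b.1 m| ≤ s ^ m * (c1 - x.1 m) := by
    intro C D hD hxD m hCD a ha
    have hx1 := hK _ (x.2.1 m)
    have hsm : (0:ℝ) ≤ s ^ m := by positivity
    by_cases hle : a.1 m ≤ x.1 m
    · obtain ⟨b, hb, hba⟩ := hCD a ha hle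
      refine ⟨b, hb, ?_⟩
      simp only at hba
      rw [hba, sub_self, abs_zero, mul_zero]
      exact mul_nonneg hsm (by linarith)
    · refine ⟨x, hxD, ?_⟩
      have := hK _ (a.2.1 m)
      rw [abs_of_pos (by linarith)]
      gcongr
  have dich : ∀ m, (∀ a ∈ A, ∃ b ∈ B, s ^ m * |a.1 m - b.1 m| ≤ s ^ m * (c1 - x.1 m)) ∨
      (∀ a ∈ B, ∃ b ∈ A, s ^ m * |a.1 m - b.1 m| ≤ s ^ m * (c1 - x.1 m)) := by
    intro m
    by_cases h1 : ∀ a ∈ A, a.1 m ≤ x.1 m → a.1 m ∈ (fun b : InvLim T K => b.1 m) '' B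
    · exact Or.inl (step A B hB' hxB m h1)
    · right
      apply step B A hA' hxA m
      push Not at h1
      obtain ⟨a, ha, hax, hnB⟩ := h1
      intro b hb hbx
      have oA := (hA'.image _ (hcont m).continuousOn).isPreconnected.ordConnected
      have oB := (hB'.image _ (hcont m).continuousOn).isPreconnected.ordConnected
      rcases le_total (a.1 m) (b.1 m) with hab | hab
      · exact oA.out (mem_image_of_mem _ ha) (mem_image_of_mem _ hxA) ⟨hab, hbx⟩
      · exact absurd (oB.out (mem_image_of_mem _ hb) (mem_image_of_mem _ hxB) ⟨hab, hax⟩) hnB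
  have hh : ∀ M : ℕ, ∀ ε > 0, ∃ m ≥ M, s ^ m * (c1 - x.1 m) ≤ ε := by
    intro M ε hε
    obtain ⟨n, hn⟩ := exists_nat_one_div_lt hε
    obtain ⟨m, hm, hm'⟩ := h (max M n)
    refine ⟨m, le_trans (le_max_left _ _) hm, hm'.le.trans (le_trans ?_ hn.le)⟩
    gcongr
    exact le_max_right _ _
  by_cases hfin : ∀ M : ℕ, ∀ ε > 0, ∃ m ≥ M, ∀ a ∈ A, ∃ b ∈ B, s ^ m * |a.1 m - b.1 m| ≤ ε
  · exact Or.inl (near_imp_subset hT hs hL hB hfin)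
  · right
    apply near_imp_subset hT hs hL hA
    push Not at hfin
    obtain ⟨M₀, ε₀, hε₀, hbad⟩ := hfin
    intro M ε hε
    obtain ⟨m, hm, hm'⟩ := hh (max M M₀) (min ε ε₀) (lt_min hε hε₀)
    refine ⟨m, le_trans (le_max_left _ _) hm, ?_⟩
    rcases dich m with h1 | h1
    · exfalso
      obtain ⟨a, ha, hab⟩ := hbad m (le_trans (le_max_right _ _) hm)
      obtain ⟨b, hb, hb'⟩ := h1 a ha
      have := hab b hb
      have := min_le_right ε ε₀
      linarith
    · intro b hb
      obtain ⟨a, ha, ha'⟩ := h1 b hb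
      exact ⟨a, ha, ha'.trans (hm'.trans (min_le_left _ _))⟩

/-- inverse branches along `x` starting from level `n0`. -/
noncomputable def invBr (s : ℝ) (x : ℕ → ℝ) (n0 : ℕ) : ℕ → ℝ → ℝ
  | 0, y => y
  | k+1, y => if x (n0 + k + 1) < 1/2 then invBr s x n0 k y / s else 1 - invBr s x n0 k y / s

theorem invBr_cont (s : ℝ) (x : ℕ → ℝ) (n0 k : ℕ) : Continuous (invBr s x n0 k) := by
  induction k with
  | zero => exact continuous_id
  | succ k ih =>
    by_cases h : x (n0 + k + 1) < 1/2
    · have : invBr s x n0 (k+1) = fun y => invBr s x n0 k y / s := by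
        funext y; simp only [invBr, if_pos h]
      rw [this]; exact ih.div_const s
    · have : invBr s x n0 (k+1) = fun y => 1 - invBr s x n0 k y / s := by
        funext y; simp only [invBr, if_neg h]
      rw [this]; exact continuous_const.sub (ih.div_const s)

theorem invBr_T {s : ℝ} (hs : 0 < s) {T : ℝ → ℝ} (hT : ∀ x, T x = min (s * x) (s * (1 - x)))
    (x : ℕ → ℝ) (n0 k : ℕ) (y : ℝ) (hy : invBr s x n0 k y ≤ s / 2) :
    T (invBr s x n0 (k+1) y) = invBr s x n0 k y := by
  simp only [invBr]
  have e1 : s * (invBr s x n0 k y / s) = invBr s x n0 k y := by field_simp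
  have e2 : s * (1 - invBr s x n0 k y / s) = s - invBr s x n0 k y := by field_simp
  split_ifs with h
  · rw [hT, e1, e2, min_eq_left]; linarith
  · rw [hT, e2, sub_sub_cancel, e1, min_eq_right]; linarith

theorem invBr_x {s : ℝ} (hs : 0 < s) {T : ℝ → ℝ} (hT : ∀ x, T x = min (s * x) (s * (1 - x)))
    {x : ℕ → ℝ} (hx : ∀ n, T (x (n+1)) = x n) (n0 k : ℕ) :
    invBr s x n0 k (x n0) = x (n0 + k) := by
  induction k with
  | zero => rfl
  | succ k ih =>
    simp only [invBr, ih]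
    rw [← hx (n0 + k), hT]
    split_ifs with h
    · rw [min_eq_left (by nlinarith)]; field_simp; rfl
    · rw [min_eq_right (by nlinarith)]
      have : s * (1 - x (n0 + k + 1)) / s = 1 - x (n0 + k + 1) := by field_simp
      rw [this]; ring_nf

theorem endpoint_mem {s : ℝ} (hs : 1 ≤ s) {T : ℝ → ℝ} (hTc : Continuous T)
    (hT : ∀ x, T x = min (s * x) (s * (1 - x))) (W : Set ℝ) (hW : IsClosed W)
    (hWT : ∀ y ∈ W, T y ∈ W) {c1 c2 : ℝ} (hc1 : c1 = s / 2) (h1 : c1 ∈ W) (h2 : c2 ∈ W)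
    {K : Set ℝ} (hK : K = Icc c2 c1) (hKT : ∀ y ∈ K, T y ∈ K)
    (x : InvLim T K) (hx : IsEndpointPt x) (n0 : ℕ) : x.1 n0 ∈ W := by
  by_contra hn
  have hs0 : 0 < s := by linarith
  obtain ⟨ε, hε, hball⟩ := Metric.nhds_basis_closedBall.mem_iff.1 (hW.isOpen_compl.mem_nhds hn)
  rw [Real.closedBall_eq_Icc] at hball
  set p := x.1 n0 with hp
  set J := Icc (p - ε) (p + ε) with hJ
  set h := invBr s x.1 n0 with hh
  have hWk : ∀ k, ∀ y ∈ W, T^[k] y ∈ W := by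
    intro k
    induction k with
    | zero => exact fun y hy => hy
    | succ k ih => intro y hy; rw [Function.iterate_succ_apply]; exact ih _ (hWT _ hy)
  have hpJ : p ∈ J := ⟨by linarith, by linarith⟩
  have main : ∀ k, (∀ y ∈ J, T^[k] (h k y) = y) → ∀ y ∈ J, h k y ∈ K := by
    intro k hk y hy
    have hnot : ∀ y ∈ J, h k y ∉ W := by
      intro y hy hw
      have := hWk k _ hw
      rw [hk y hy] at this
      exact hball hy this
    have oc : OrdConnected (h k '' J) :=
      (isPreconnected_Icc.image _ (invBr_cont s x.1 n0 k).continuousOn).ordConnected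
    have hxk : h k p ∈ K := by
      rw [hh, hp, invBr_x hs0 hT x.2.2]; exact x.2.1 _
    rw [hK] at hxk ⊢
    refine ⟨?_, ?_⟩
    · by_contra hlt
      push Not at hlt
      obtain ⟨w, hw, hw'⟩ := oc.out (mem_image_of_mem _ hy) (mem_image_of_mem _ hpJ)
        ⟨hlt.le, hxk.1⟩
      exact hnot w hw (hw' ▸ h2)
    · by_contra hlt
      push Not at hlt
      obtain ⟨w, hw, hw'⟩ := oc.out (mem_image_of_mem _ hpJ) (mem_image_of_mem _ hy)
        ⟨hxk.2, hlt.le⟩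
      exact hnot w hw (hw' ▸ h1)
  have hTh : ∀ k, (∀ y ∈ J, h k y ∈ K) → ∀ y ∈ J, T (h (k+1) y) = h k y := by
    intro k hk y hy
    have := hk y hy
    rw [hK] at this
    exact invBr_T hs0 hT x.1 n0 k y (hc1 ▸ this.2)
  have key : ∀ k, ∀ y ∈ J, T^[k] (h k y) = y := by
    intro k
    induction k with
    | zero => exact fun y _ => rfl
    | succ k ih =>
      intro y hy
      rw [Function.iterate_succ_apply, hTh k (main k ih) y hy, ih y hy]
  have hmem : ∀ k, ∀ y ∈ J, h k y ∈ K := fun k => main k (key k)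
  have hKk : ∀ k, ∀ y ∈ K, T^[k] y ∈ K := by
    intro k
    induction k with
    | zero => exact fun y hy => hy
    | succ k ih => intro y hy; rw [Function.iterate_succ_apply]; exact ih _ (hKT _ hy)
  let H : ℝ → ℕ → ℝ := fun y n => T^[n0] (h n y)
  have Hc : Continuous H :=
    continuous_pi fun n => (hTc.iterate n0).comp (invBr_cont s x.1 n0 n)
  have Hmem : ∀ y ∈ J, (∀ n, H y n ∈ K) ∧ ∀ n, T (H y (n + 1)) = H y n := by
    intro y hy
    refine ⟨fun n => hKk _ _ (hmem n y hy), fun n => ?_⟩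
    show T (T^[n0] (h (n+1) y)) = T^[n0] (h n y)
    rw [← Function.iterate_succ_apply' T, Function.iterate_succ_apply, hTh n (hmem n) y hy]
  have Hn0 : ∀ y ∈ J, H y n0 = y := fun y hy => key n0 y hy
  have Hp : H p = x.1 := by
    funext n
    show T^[n0] (h n p) = x.1 n
    rw [hh, hp, invBr_x hs0 hT x.2.2, add_comm]
    exact invlim_iter x n n0
  have good : ∀ a b, a ≤ b → Icc a b ⊆ J →
      IsCompact ((Subtype.val : InvLim T K → ℕ → ℝ) ⁻¹' (H '' Icc a b)) ∧
      IsConnected ((Subtype.val : InvLim T K → ℕ → ℝ) ⁻¹' (H '' Icc a b)) := by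
    intro a b hab hJ'
    have hr : H '' Icc a b ⊆ range (Subtype.val : InvLim T K → ℕ → ℝ) := by
      rintro _ ⟨y, hy, rfl⟩
      exact ⟨⟨H y, Hmem y (hJ' hy)⟩, rfl⟩
    refine ⟨(IsInducing.subtypeVal.isCompact_preimage_iff hr).2 (isCompact_Icc.image Hc), ?_, ?_⟩
    · exact ⟨⟨H a, Hmem a (hJ' ⟨le_rfl, hab⟩)⟩, a, ⟨le_rfl, hab⟩, rfl⟩
    · have hind : IsInducing (Subtype.val : InvLim T K → ℕ → ℝ) := ⟨rfl⟩
      apply hind.isPreconnected_image.1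
      rw [image_preimage_eq_of_subset hr]
      exact isPreconnected_Icc.image _ Hc.continuousOn
  have s1 : Icc (p - ε) p ⊆ J := Icc_subset_Icc le_rfl (by linarith)
  have s2 : Icc p (p + ε) ⊆ J := Icc_subset_Icc (by linarith) le_rfl
  obtain ⟨g1, g2⟩ := good (p - ε) p (by linarith) s1
  obtain ⟨g3, g4⟩ := good p (p + ε) (by linarith) s2
  rcases hx _ _ g1 g2 g3 g4 ⟨p, ⟨by linarith, le_rfl⟩, Hp⟩ ⟨p, ⟨le_rfl, by linarith⟩, Hp⟩ with hs | hs
  · have hm : p - ε ∈ J := ⟨le_rfl, by linarith⟩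
    obtain ⟨y, hy, hy'⟩ := @hs ⟨H (p - ε), Hmem _ hm⟩ ⟨p - ε, ⟨le_rfl, by linarith⟩, rfl⟩
    have := congrFun hy' n0
    rw [Hn0 y (s2 hy)] at this
    have h3 : y = p - ε := this.trans (Hn0 _ hm)
    have := hy.1
    linarith
  · have hm : p + ε ∈ J := ⟨by linarith, le_rfl⟩
    obtain ⟨y, hy, hy'⟩ := @hs ⟨H (p + ε), Hmem _ hm⟩ ⟨p + ε, ⟨by linarith, le_rfl⟩, rfl⟩
    have := congrFun hy' n0
    rw [Hn0 y (s1 hy)] at this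
    have h3 : y = p + ε := this.trans (Hn0 _ hm)
    have := hy.2
    linarith

/-- If the critical point `c` of a tent map `T` is recurrent with
infinite orbit, then the set `E` of endpoints of the core inverse limit `X′` is
uncountable; moreover `E` has no isolated points and is dense in the set `F` of
folding points. -/
theorem stmt11 (s : ℝ) (hs : s ∈ Set.Ioc (Real.sqrt 2) 2) (T : ℝ → ℝ)
    (hT : ∀ x, T x = min (s * x) (s * (1 - x))) (c : ℝ) (hc : c = 1/2)
    (hinf : Function.Injective fun n : ℕ => T^[n] c)
    (hrec : c ∈ omegaSet T c)
    (K : Set ℝ) (hK : K = Set.Icc (T^[2] c) (T c))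
    (E F : Set (InvLim T K))
    (hE : E = {x : InvLim T K | IsEndpointPt x})
    (hF : F = {x : InvLim T K | ∀ n, x.1 n ∈ omegaSet T c}) :
    ¬ E.Countable ∧ (∀ x ∈ E, x ∈ closure (E \ {x})) ∧ F ⊆ closure E := by
  obtain ⟨hs1, hs2⟩ := hs
  have hs1' : 1 ≤ s := by
    have : (1:ℝ) ≤ Real.sqrt 2 := Real.one_le_sqrt.2 (by norm_num)
    linarith
  have hTc : Continuous T := by
    have : T = fun x => min (s * x) (s * (1 - x)) := funext hT
    rw [this]; fun_prop
  have hL : ∀ x y, |T x - T y| ≤ s * |x - y| := by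
    intro x y
    rw [hT, hT]
    refine (abs_min_sub_min_le_max _ _ _ _).trans ?_
    have e1 : s * x - s * y = s * (x - y) := by ring
    have e2 : s * (1 - x) - s * (1 - y) = s * (y - x) := by ring
    rw [e1, e2, abs_mul, abs_mul, abs_sub_comm y x, max_self, abs_of_nonneg (by linarith : 0 ≤ s)]
  have hc1 : T c = s / 2 := by
    rw [hT, hc, min_eq_left (by linarith)]; ring
  have hc2 : T^[2] c = s * (1 - s / 2) := by
    show T (T c) = _
    rw [hc1, hT, min_eq_right]
    nlinarith
  have hKT : ∀ y ∈ K, T y ∈ K := by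
    intro y hy
    rw [hK, hc1, hc2] at hy ⊢
    obtain ⟨ha, hb⟩ := hy
    have hy0 : 0 ≤ y := le_trans (by nlinarith) ha
    rw [hT]
    refine ⟨le_min (by nlinarith) (by nlinarith), ?_⟩
    rcases le_total y (1/2) with h | h
    · exact (min_le_left _ _).trans (by nlinarith)
    · exact (min_le_right _ _).trans (by nlinarith)
  have hcK : ∀ n, T^[n] c ∈ K := by
    intro n
    induction n with
    | zero =>
      rw [hK, hc1, hc2]
      show c ∈ _
      rw [hc]
      exact ⟨by nlinarith [sq_nonneg (s - 1)], by linarith⟩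
    | succ n ih => rw [Function.iterate_succ_apply']; exact hKT _ ih
  have hKc : IsCompact K := hK ▸ isCompact_Icc
  set W := omegaSet T c with hWdef
  have hWc : IsClosed W := omega_closed T c
  have hWT : ∀ y ∈ W, T y ∈ W := fun y hy => omega_map hTc hy
  have hWK : W ⊆ K := by
    rintro y ⟨φ, -, h⟩
    exact hKc.isClosed.mem_of_tendsto h (Eventually.of_forall fun n => hcK _)
  have hWit : ∀ k, ∀ y ∈ W, T^[k] y ∈ W := by
    intro k
    induction k with
    | zero => exact fun y hy => hy
    | succ k ih => intro y hy; rw [Function.iterate_succ_apply]; exact ih _ (hWT _ hy)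
  -- a backward orbit of `T c` in `W`
  obtain ⟨u, hu0, huW, hu⟩ : ∃ u : ℕ → ℝ, u 0 = T c ∧ (∀ n, u n ∈ W) ∧ ∀ n, T (u (n+1)) = u n := by
    choose! g hg1 hg2 using fun y (hy : y ∈ W) => omega_surj hTc hKc hcK hy
    have hgm : ∀ n, g^[n] (T c) ∈ W := by
      intro n
      induction n with
      | zero => exact hWT _ hrec
      | succ n ih => rw [Function.iterate_succ_apply']; exact hg1 _ ih
    refine ⟨fun n => g^[n] (T c), rfl, hgm, fun n => ?_⟩
    simp only [Function.iterate_succ_apply']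
    exact hg2 _ (hgm n)
  -- points of `F` hitting `T c`
  have hw : ∀ m, ∃ w ∈ F, w.1 m = T c := by
    intro m
    have hm : ∀ n, T^[m] (u n) ∈ W := fun n => hWit _ _ (huW n)
    let w : InvLim T K := ⟨fun n => T^[m] (u n), fun n => hWK (hm n), fun n => by
      rw [← Function.iterate_succ_apply' T, Function.iterate_succ_apply, hu]⟩
    refine ⟨w, by rw [hF]; exact hm, ?_⟩
    let uu : InvLim T K := ⟨u, fun n => hWK (huW n), hu⟩
    have := invlim_iter uu 0 m
    rw [zero_add] at this
    exact this.trans hu0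
  have dens : ∀ z ∈ F, ∀ O ∈ 𝓝 z, ∀ j : ℕ, ∃ w ∈ F, w ∈ O ∧ w ≠ z ∧ ∃ m ≥ j, w.1 m = T c := by
    intro z hz O hO j
    obtain ⟨N, V, hV, hVO⟩ := invlim_nhds hTc z hO
    rw [hF] at hz
    obtain ⟨φ, hφ, hlim⟩ := hz N
    obtain ⟨n₀, hn₀⟩ := eventually_atTop.1 (hlim.eventually hV)
    have hk : ∃ k ≥ j + 1, T^[k] c ∈ V ∧ T^[k] c ≠ z.1 N := by
      set a := max n₀ (j + 1)
      have ha1 : j + 1 ≤ φ a := (le_max_right _ _).trans (hφ.id_le a)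
      have ha2 : φ a < φ (a + 1) := hφ (Nat.lt_succ_self a)
      by_cases he : T^[φ a] c = z.1 N
      · refine ⟨φ (a+1), by omega, hn₀ _ ((le_max_left _ _).trans (Nat.le_succ a)), fun he' => ?_⟩
        have := hinf (he.trans he'.symm)
        omega
      · exact ⟨φ a, ha1, hn₀ _ (le_max_left _ _), he⟩
    obtain ⟨k, hkj, hkV, hkz⟩ := hk
    obtain ⟨w, hwF, hwm⟩ := hw (N + (k - 1))
    have hwN : w.1 N = T^[k] c := by
      rw [← invlim_iter w N (k-1), hwm, ← Function.iterate_succ_apply]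
      congr 2
      omega
    refine ⟨w, hwF, hVO w (hwN ▸ hkV), fun h => hkz ?_, N + (k-1), by omega, hwm⟩
    rw [← hwN, h]
  have hEF : E ⊆ F := by
    intro x hx
    rw [hE] at hx
    rw [hF]
    exact fun n => endpoint_mem hs1' hTc hT W hWc hWT hc1 (hWT _ hrec) (hWit 2 _ hrec) hK hKT x hx n
  -- the closed set F as a Baire space
  have hcont : ∀ n, Continuous (fun b : InvLim T K => b.1 n) := fun n =>
    (continuous_apply n).comp continuous_subtype_val
  have hFc : IsClosed F := by
    rw [hF]
    have : {x : InvLim T K | ∀ n, x.1 n ∈ W} = ⋂ n, (fun b : InvLim T K => b.1 n) ⁻¹' W := by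
      ext; simp
    rw [this]
    exact isClosed_iInter fun n => hWc.preimage (hcont n)
  have hZc : IsClosed {x : ℕ → ℝ | (∀ n, x n ∈ K) ∧ ∀ n, T (x (n + 1)) = x n} := by
    have : {x : ℕ → ℝ | (∀ n, x n ∈ K) ∧ ∀ n, T (x (n + 1)) = x n} =
      (⋂ n, (fun x : ℕ → ℝ => x n) ⁻¹' K) ∩ ⋂ n, {x : ℕ → ℝ | T (x (n + 1)) = x n} := by
      ext; simp
    rw [this]
    refine (isClosed_iInter fun n => hKc.isClosed.preimage (continuous_apply n)).inter
      (isClosed_iInter fun n => isClosed_eq (hTc.comp (continuous_apply _)) (continuous_apply _))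
  haveI : PolishSpace (InvLim T K) := hZc.polishSpace
  haveI : PolishSpace F := hFc.polishSpace
  let U : ℕ → Set F := fun j => {w | ∃ m ≥ j, s ^ m * (T c - w.1.1 m) < 1 / ((j : ℝ) + 1)}
  have hUo : ∀ j, IsOpen (U j) := by
    intro j
    have : U j = ⋃ m, ⋃ (_ : m ≥ j), {w : F | s ^ m * (T c - w.1.1 m) < 1 / ((j : ℝ) + 1)} := by
      ext w; simp [U]
    rw [this]
    refine isOpen_iUnion fun m => isOpen_iUnion fun _ => isOpen_lt ?_ continuous_const
    exact continuous_const.mul (continuous_const.sub ((hcont m).comp continuous_subtype_val))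
  have hsub : ∀ (z : F) (O : Set F), O ∈ 𝓝 z → ∀ j : ℕ, ∃ w ∈ O, w ≠ z ∧ w ∈ U j := by
    intro z O hO j
    rw [nhds_subtype_eq_comap, mem_comap] at hO
    obtain ⟨O', hO', hOO⟩ := hO
    obtain ⟨w, hwF, hwO, hwz, m, hm, hmc⟩ := dens z.1 z.2 O' hO' j
    refine ⟨⟨w, hwF⟩, hOO hwO, fun h => hwz (by rw [← h]), m, hm, ?_⟩
    simp only [hmc, sub_self, mul_zero]
    positivity
  have hUd : ∀ j, Dense (U j) := by
    intro j z
    rw [mem_closure_iff_nhds]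
    intro O hO
    obtain ⟨w, h1, -, h2⟩ := hsub z O hO j
    exact ⟨w, h1, h2⟩
  have hSd : Dense (⋂ j, U j) := dense_iInter_of_isOpen hUo hUd
  have hSE : ∀ w ∈ ⋂ j, U j, w.1 ∈ E := by
    intro w hw
    rw [hE]
    refine endpoint_of_close hTc hs1' hL (c1 := T c) (fun y hy => ?_) w.1 (fun j => mem_iInter.1 hw j)
    rw [hK] at hy
    exact hy.2
  have hpt : ∀ z : F, Dense ({z}ᶜ : Set F) := by
    intro z w
    rw [mem_closure_iff_nhds]
    intro O hO
    by_cases h : w = z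
    · obtain ⟨v, h1, h2, -⟩ := hsub w O hO 0
      exact ⟨v, h1, h ▸ h2⟩
    · exact ⟨w, mem_of_mem_nhds hO, h⟩
  refine ⟨fun hcount => ?_, fun x hx => ?_, fun x hx => ?_⟩
  · have hS : (⋂ j, U j).Countable := by
      refine (hcount.preimage_of_injOn (f := (Subtype.val : F → InvLim T K))
        Subtype.val_injective.injOn).mono fun w hw => hSE w hw
    have hd2 : Dense (⋂ z ∈ ⋂ j, U j, ({z}ᶜ : Set F)) :=
      dense_biInter_of_isOpen (fun z _ => isOpen_compl_singleton) hS (fun z _ => hpt z)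
    have hG : IsGδ (⋂ j, U j) := IsGδ.iInter_of_isOpen hUo
    have hG2 : IsGδ (⋂ z ∈ ⋂ j, U j, ({z}ᶜ : Set F)) :=
      IsGδ.biInter hS fun z _ => isOpen_compl_singleton.isGδ
    have hd3 := hSd.inter_of_Gδ hG hG2 hd2
    obtain ⟨w0, hw0, -⟩ := hw 0
    haveI : Nonempty F := ⟨⟨w0, hw0⟩⟩
    obtain ⟨v, hv1, hv2⟩ := hd3.nonempty
    exact (mem_iInter₂.1 hv2 v hv1) rfl
  · rw [mem_closure_iff]
    intro O hO hxO
    let x' : F := ⟨x, hEF hx⟩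
    have hO' : IsOpen (Subtype.val ⁻¹' O ∩ {x'}ᶜ : Set F) :=
      (hO.preimage continuous_subtype_val).inter isOpen_compl_singleton
    obtain ⟨w, hw1, hw2, -⟩ := hsub x' (Subtype.val ⁻¹' O)
      ((hO.preimage continuous_subtype_val).mem_nhds hxO) 0
    obtain ⟨v, hv, hvS⟩ := hSd.inter_open_nonempty _ hO' ⟨w, hw1, hw2⟩
    exact ⟨v.1, hv.1, hSE v hvS, fun h => hv.2 (Subtype.ext h)⟩
  · rw [mem_closure_iff]
    intro O hO hxO
    obtain ⟨v, hv, hvS⟩ := hSd.inter_open_nonempty _ (hO.preimage continuous_subtype_val)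
      ⟨⟨x, hx⟩, hxO⟩
    exact ⟨v.1, hv, hSE v hvS⟩
end

section
/- If the kneading map of a tent map satisfies Q(k) → ∞, then every folding point of the core inverse limit X′ lies in a degenerate basic arc (hence is a spiral or nasty endpoint). -/
open Set Filter Topology

/-- The basic arc of `x`: the closure of the set of points sharing the backward
itinerary of `x`. -/
def basicArcOf (T : ℝ → ℝ) (K : Set ℝ) (c : ℝ) (x : InvLim T K) : Set (InvLim T K) :=
  closure {y : InvLim T K | ∀ i, 1 ≤ i → y.1 i = c ∨ (c < y.1 i ↔ c < x.1 i)}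


section Helpers
variable {T : ℝ → ℝ} {s c : ℝ}

lemma tent_lip (hs : 0 < s) (hT : ∀ y, T y = T c - s * |y - c|) (u v : ℝ) :
    |T u - T v| ≤ s * |u - v| := by
  rw [hT u, hT v]
  have h : |(|v - c| - |u - c|)| ≤ |u - v| := by
    have := abs_abs_sub_abs_le_abs_sub (v - c) (u - c)
    rw [abs_sub_comm u v]
    have e : v - c - (u - c) = v - u := by ring
    rwa [e] at this
  have e : T c - s * |u - c| - (T c - s * |v - c|) = s * (|v - c| - |u - c|) := by ring
  rw [e, abs_mul, abs_of_pos hs]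
  exact mul_le_mul_of_nonneg_left h hs.le

lemma tent_exact (hs : 0 < s) (hT : ∀ y, T y = T c - s * |y - c|) (u v : ℝ)
    (huv : 0 ≤ (u - c) * (v - c)) : |T u - T v| = s * |u - v| := by
  rw [hT u, hT v]
  have e : T c - s * |u - c| - (T c - s * |v - c|) = s * (|v - c| - |u - c|) := by ring
  rw [e, abs_mul, abs_of_pos hs]
  congr 1
  rcases mul_nonneg_iff.mp huv with ⟨h1, h2⟩ | ⟨h1, h2⟩
  · rw [abs_of_nonneg h1, abs_of_nonneg h2, abs_sub_comm u v]; congr 1; ring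
  · rw [abs_of_nonpos h1, abs_of_nonpos h2]; congr 1; ring

lemma tent_iter_lip (hs : 0 < s) (hT : ∀ y, T y = T c - s * |y - c|) (u v : ℝ) (n : ℕ) :
    |T^[n] u - T^[n] v| ≤ s ^ n * |u - v| := by
  induction n with
  | zero => simp
  | succ n ih =>
    rw [Function.iterate_succ_apply', Function.iterate_succ_apply']
    refine (tent_lip hs hT _ _).trans ?_
    rw [pow_succ', mul_assoc]
    exact mul_le_mul_of_nonneg_left ih hs.le

lemma tent_iter_exact (hs : 0 < s) (hT : ∀ y, T y = T c - s * |y - c|) (u v : ℝ) (n : ℕ)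
    (h : ∀ j < n, 0 ≤ (T^[j] u - c) * (T^[j] v - c)) :
    |T^[n] u - T^[n] v| = s ^ n * |u - v| := by
  induction n with
  | zero => simp
  | succ n ih =>
    rw [Function.iterate_succ_apply', Function.iterate_succ_apply',
      tent_exact hs hT _ _ (h n (by omega)), ih (fun j hj => h j (by omega)), pow_succ', mul_assoc]

lemma tent_image_uIcc (hs : 0 < s) (hT : ∀ y, T y = T c - s * |y - c|) (u v : ℝ)
    (h : c ∉ Set.uIcc u v) : T '' Set.uIcc u v = Set.uIcc (T u) (T v) := by
  have hcont : Continuous T := by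
    have : T = fun y => T c - s * |y - c| := funext hT
    rw [this]; fun_prop
  apply Set.Subset.antisymm
  · rintro _ ⟨y, hy, rfl⟩
    rw [Set.mem_uIcc] at h hy ⊢
    push Not at h
    rw [hT y, hT u, hT v]
    rcases lt_or_ge c y with hc | hc
    · have : c < u ∧ c < v := by
        by_contra hcon
        rcases hy with hy | hy
        · by_cases hu : u ≤ c
          · have := h.1 hu; linarith
          · exact hcon ⟨by linarith, by linarith⟩
        · by_cases hu : v ≤ c
          · have := h.2 hu; linarith
          · exact hcon ⟨by linarith, by linarith⟩
      rw [abs_of_pos (by linarith), abs_of_pos (by linarith), abs_of_pos (by linarith)]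
      rcases hy with hy | hy
      · right; constructor <;> nlinarith
      · left; constructor <;> nlinarith
    · have : u < c ∧ v < c := by
        rcases hy with hy | hy
        · have := h.1 (by linarith); exact ⟨by linarith, this⟩
        · have := h.2 (by linarith); exact ⟨this, by linarith⟩
      rw [abs_of_nonpos (by linarith : y - c ≤ 0), abs_of_neg (by linarith : u - c < 0),
        abs_of_neg (by linarith : v - c < 0)]
      rcases hy with hy | hy
      · left; constructor <;> nlinarith
      · right; constructor <;> nlinarith
  · exact intermediate_value_uIcc hcont.continuousOn

lemma same_side (u v : ℝ) (h : c ∉ Set.uIcc u v) : 0 ≤ (u - c) * (v - c) := by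
  rw [Set.mem_uIcc] at h
  push Not at h
  rcases lt_or_ge c u with hu | hu
  · rcases lt_or_ge c v with hv | hv
    · exact mul_nonneg (by linarith) (by linarith)
    · have := h.2 hv; linarith
  · have := h.1 hu
    exact mul_nonneg_of_nonpos_of_nonpos (by linarith) (by linarith)

lemma D_form (hs : 0 < s) (hT : ∀ y, T y = T c - s * |y - c|)
    (D : ℕ → Set ℝ)
    (hD1 : D 1 = Set.uIcc c (T c))
    (hDcut : ∀ n, 1 ≤ n → c ∈ D n → D (n + 1) = Set.uIcc (T^[n+1] c) (T c))
    (hDnot : ∀ n, 1 ≤ n → c ∉ D n → D (n + 1) = T '' D n) (n : ℕ) (hn : 1 ≤ n) :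
    ∃ e, D n = Set.uIcc (T^[n] c) e := by
  induction n, hn using Nat.le_induction with
  | base => exact ⟨c, by rw [hD1, Set.uIcc_comm]; rfl⟩
  | succ n hn ih =>
    by_cases h : c ∈ D n
    · exact ⟨_, hDcut n hn h⟩
    · obtain ⟨e, he⟩ := ih
      refine ⟨T e, ?_⟩
      rw [hDnot n hn h, he, tent_image_uIcc hs hT _ _ (he ▸ h), Function.iterate_succ_apply']

lemma D_mem (hs : 0 < s) (hT : ∀ y, T y = T c - s * |y - c|)
    (hnc : ∀ n, 1 ≤ n → T^[n] c ≠ c) (hc1 : c < T c)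
    (D : ℕ → Set ℝ)
    (hD1 : D 1 = Set.uIcc c (T c))
    (hDcut : ∀ n, 1 ≤ n → c ∈ D n → D (n + 1) = Set.uIcc (T^[n+1] c) (T c))
    (hDnot : ∀ n, 1 ≤ n → c ∉ D n → D (n + 1) = T '' D n) (m : ℕ) (hm : 1 ≤ m)
    (p : ℝ) (hp : p ≤ T c) (h : ∀ j < m, 0 ≤ (T^[j] p - c) * (T^[j+1] c - c)) :
    T^[m] p ∈ D (m + 1) := by
  have key : ∀ j ≤ m, T^[j] p ∈ D (j + 1) := by
    intro j
    induction j with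
    | zero =>
      intro _
      have h0 := h 0 (by omega)
      simp only [Function.iterate_zero, id, zero_add, Function.iterate_one] at h0 ⊢
      rw [hD1, Set.uIcc_of_le hc1.le]
      refine ⟨?_, hp⟩
      have := nonneg_of_mul_nonneg_left h0 (by linarith)
      linarith
    | succ j ih =>
      intro hj
      have ih := ih (by omega)
      by_cases hcD : c ∈ D (j + 1)
      · rw [hDcut (j+1) (by omega) hcD, Function.iterate_succ_apply' T j p,
          Function.iterate_succ_apply' T (j+1) c]
        obtain ⟨e, he⟩ := D_form hs hT D hD1 hDcut hDnot (j+1) (by omega)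
        rw [he] at ih hcD
        have hj' := h j (by omega)
        have hne := hnc (j+1) (by omega)
        generalize T^[j] p = q at *
        generalize T^[j+1] c = a at *
        rw [Set.mem_uIcc] at ih hcD
        rw [Set.mem_uIcc]
        left
        rw [hT q, hT a]
        have hq : 0 ≤ s * |q - c| := by positivity
        refine ⟨?_, by linarith⟩
        have : |q - c| ≤ |a - c| := by
          rcases lt_or_gt_of_ne hne with hlt | hgt
          · have hq : q ≤ c := by nlinarith
            rw [abs_of_nonpos (by linarith), abs_of_neg (by linarith)]
            rcases ih with ih | ih <;> rcases hcD with hcD | hcD <;> linarith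
          · have hq : c ≤ q := by nlinarith
            rw [abs_of_nonneg (by linarith), abs_of_pos (by linarith)]
            rcases ih with ih | ih <;> rcases hcD with hcD | hcD <;> linarith
        nlinarith
      · rw [hDnot (j+1) (by omega) hcD, Function.iterate_succ_apply']
        exact Set.mem_image_of_mem _ ih
  exact key m le_rfl

lemma D_small (hs : 1 < s) (hT : ∀ y, T y = T c - s * |y - c|)
    (hb : ∀ n, T^[n] c ∈ Set.Icc (0:ℝ) 1)
    (D : ℕ → Set ℝ)
    (hDcut : ∀ n, 1 ≤ n → c ∈ D n → D (n + 1) = Set.uIcc (T^[n+1] c) (T c))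
    (hDnot : ∀ n, 1 ≤ n → c ∉ D n → D (n + 1) = T '' D n)
    (S : ℕ → ℕ) (hS : StrictMono S) (hS0 : S 0 = 1)
    (hSrange : ∀ n, 1 ≤ n → (c ∈ D n ↔ n ∈ Set.range S))
    (Q : ℕ → ℕ) (hQ : ∀ k, 1 ≤ k → S k = S (k - 1) + S (Q k))
    (hQinf : Filter.Tendsto Q Filter.atTop Filter.atTop) (ε : ℝ) (hε : 0 < ε) :
    ∃ N, ∀ n ≥ N, ∀ u ∈ D n, ∀ v ∈ D n, |u - v| < ε := by
  have hs0 : 0 < s := by linarith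
  have hS1 : ∀ k, 1 ≤ S k := fun k => hS0 ▸ hS.monotone (Nat.zero_le k)
  have form : ∀ k i, 1 ≤ i → i ≤ S (Q (k+1)) →
      D (S k + i) = Set.uIcc (T^[S k + i] c) (T^[i] c) ∧
      |T^[S k + i] c - T^[i] c| = s ^ i * |T^[S k] c - c| := by
    intro k i hi
    induction i, hi using Nat.le_induction with
    | base =>
      intro _
      have hcD : c ∈ D (S k) := (hSrange _ (hS1 k)).2 ⟨k, rfl⟩
      refine ⟨hDcut _ (hS1 k) hcD, ?_⟩
      rw [Function.iterate_succ_apply', Function.iterate_one, pow_one]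
      exact tent_exact hs0 hT _ _ (by simp)
    | succ i hi ih =>
      intro hle
      obtain ⟨h1, h2⟩ := ih (by omega)
      have hcD : c ∉ D (S k + i) := by
        rw [hSrange _ (by omega)]
        rintro ⟨l, hl⟩
        have hk := hQ (k+1) (by omega)
        simp only [Nat.add_sub_cancel] at hk
        have a1 : S k < S l := by omega
        have a2 : S l < S (k+1) := by omega
        have := hS.lt_iff_lt.1 a1
        have := hS.lt_iff_lt.1 a2
        omega
      have hD := hDnot _ (by omega) hcD
      rw [h1] at hcD hD
      rw [← add_assoc, hD, tent_image_uIcc hs0 hT _ _ hcD, Function.iterate_succ_apply',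
        Function.iterate_succ_apply', tent_exact hs0 hT _ _ (same_side _ _ hcD), h2]
      exact ⟨rfl, by ring⟩
  have hlast : ∀ k, |T^[S (k+1)] c - T^[S (Q (k+1))] c| = s ^ (S (Q (k+1))) * |T^[S k] c - c| := by
    intro k
    have := (form k (S (Q (k+1))) (hS1 _) le_rfl).2
    have hk := hQ (k+1) (by omega)
    simp only [Nat.add_sub_cancel] at hk
    rwa [← hk] at this
  -- c_{S_k} → c
  have hconv : ∃ M, ∀ k ≥ M, |T^[S k] c - c| < ε / 2 := by
    obtain ⟨m, hm⟩ := pow_unbounded_of_one_lt (2 / ε) hs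
    obtain ⟨M, hM⟩ := Filter.eventually_atTop.1 (hQinf.eventually_ge_atTop m)
    refine ⟨M, fun k hk => ?_⟩
    have h1 : m ≤ S (Q (k+1)) := (hM (k+1) (by omega)).trans (hS.le_apply)
    have h2 : s ^ m ≤ s ^ (S (Q (k+1))) := pow_le_pow_right₀ hs.le h1
    have h3 := hlast k
    have h4 : |T^[S (k+1)] c - T^[S (Q (k+1))] c| ≤ 1 := by
      have := hb (S (k+1)); have := hb (S (Q (k+1)))
      simp only [Set.mem_Icc] at *
      rw [abs_le]; constructor <;> linarith
    have h5 : 2 / ε * |T^[S k] c - c| ≤ 1 ∧ (|T^[S k] c - c| = 0 ∨ 2 / ε * |T^[S k] c - c| < 1) := by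
      rcases (abs_nonneg (T^[S k] c - c)).eq_or_lt with h0 | h0
      · rw [← h0]; simp
      · have : 2 / ε * |T^[S k] c - c| < s ^ (S (Q (k+1))) * |T^[S k] c - c| :=
          mul_lt_mul_of_pos_right (by linarith) h0
        exact ⟨by linarith, Or.inr (by linarith)⟩
    rcases h5.2 with h6 | h6
    · rw [h6]; positivity
    · rw [div_mul_eq_mul_div, div_lt_one hε] at h6
      linarith
  obtain ⟨M, hM⟩ := hconv
  obtain ⟨M', hM'⟩ := Filter.eventually_atTop.1 (hQinf.eventually_ge_atTop M)
  refine ⟨S (max M M') + 1, fun n hn => ?_⟩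
  -- locate n
  have hloc : ∃ k, max M M' ≤ k ∧ S k < n ∧ n ≤ S (k+1) := by
    have hex : ∃ l, n ≤ S l := ⟨n, hS.le_apply⟩
    have hf := Nat.find_spec hex
    have hmin := fun l => @Nat.find_min _ _ hex l
    set l := Nat.find hex
    have hl : max M M' < l := by
      rw [← hS.lt_iff_lt]; omega
    refine ⟨l - 1, by omega, ?_, ?_⟩
    · have := hmin (l-1) (by omega); omega
    · rwa [Nat.sub_add_cancel (by omega)]
  obtain ⟨k, hk1, hk2, hk3⟩ := hloc
  obtain ⟨i, rfl⟩ := Nat.exists_eq_add_of_lt hk2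
  have hk := hQ (k+1) (by omega)
  simp only [Nat.add_sub_cancel] at hk
  obtain ⟨f1, f2⟩ := form k (i+1) (by omega) (by omega)
  rw [← add_assoc] at f1 f2
  have g1 := hM (k+1) (by omega)
  have g2 := hM (Q (k+1)) (hM' (k+1) (by omega))
  have g3 := hlast k
  have g4 : s ^ (i+1) ≤ s ^ (S (Q (k+1))) := pow_le_pow_right₀ hs.le (by omega)
  have g5 := mul_le_mul_of_nonneg_right g4 (abs_nonneg (T^[S k] c - c))
  have g6 := abs_sub_le (T^[S (k+1)] c) c (T^[S (Q (k+1))] c)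
  rw [abs_sub_comm c] at g6
  intro u hu v hv
  rw [f1] at hu hv
  have := Set.abs_sub_le_of_uIcc_subset_uIcc (Set.uIcc_subset_uIcc hu hv)
  rw [abs_sub_comm u v]
  rw [abs_sub_comm] at f2
  linarith

/-- Core lemma. -/
lemma core (hs : 1 < s) (hT : ∀ y, T y = T c - s * |y - c|)
    (hnc : ∀ n, 1 ≤ n → T^[n] c ≠ c) (hc1 : c < T c)
    (D : ℕ → Set ℝ)
    (hD1 : D 1 = Set.uIcc c (T c))
    (hDcut : ∀ n, 1 ≤ n → c ∈ D n → D (n + 1) = Set.uIcc (T^[n+1] c) (T c))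
    (hDnot : ∀ n, 1 ≤ n → c ∉ D n → D (n + 1) = T '' D n)
    (hsmall : ∀ ε > 0, ∃ N, ∀ n ≥ N, ∀ u ∈ D n, ∀ v ∈ D n, |u - v| < ε)
    (x z : ℕ → ℝ) (hx : ∀ n, T (x (n+1)) = x n) (hz : ∀ n, T (z (n+1)) = z n)
    (hω : ∀ n, ∀ ε > 0, ∃ k, 1 ≤ k ∧ |T^[k] c - x n| < ε)
    (hxc : ∀ n, 1 ≤ n → x n ≠ c) (hxz : ∀ n, 1 ≤ n → 0 ≤ (z n - c) * (x n - c)) :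
    x 0 = z 0 := by
  have hs0 : 0 < s := by linarith
  have hle : ∀ y, T y ≤ T c := fun y => by
    rw [hT y]; have : 0 ≤ s * |y - c| := by positivity
    linarith
  have hit : ∀ (w : ℕ → ℝ), (∀ n, T (w (n+1)) = w n) → ∀ j n, T^[j] (w (n + j)) = w n := by
    intro w hw j
    induction j with
    | zero => intro n; rfl
    | succ j ih =>
      intro n
      rw [Function.iterate_succ_apply, ← add_assoc, hw, ih]
  have hit' : ∀ (w : ℕ → ℝ), (∀ n, T (w (n+1)) = w n) → ∀ n j, j ≤ n →
      T^[j] (w n) = w (n - j) := by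
    intro w hw n j hj
    have := hit w hw j (n - j)
    rwa [Nat.sub_add_cancel hj] at this
  -- distance relation
  have hdist : ∀ y, T c - T y = s * |y - c| := fun y => by rw [hT y]; ring
  -- sign helper
  have hsign : ∀ a b d : ℝ, |a - b| ≤ d → d ≤ |b - c| → 0 ≤ (a - c) * (b - c) := by
    intro a b d h1 h2
    have h3 := abs_le.1 (h1.trans h2)
    rcases le_total c b with h | h
    · rw [abs_of_nonneg (by linarith)] at h3
      exact mul_nonneg (by linarith) (by linarith)
    · rw [abs_of_nonpos (by linarith)] at h3
      exact mul_nonneg_of_nonpos_of_nonpos (by linarith) (by linarith)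
  have hsign2 : ∀ a b d : ℝ, b ≠ 0 → 0 ≤ a * b → 0 ≤ d * b → 0 ≤ a * d := by
    intro a b d hb h1 h2
    have : 0 < b ^ 2 := by positivity
    by_contra hcon
    push Not at hcon
    nlinarith [mul_nonneg h1 h2]
  by_cases hinf : ∀ N, ∃ n ≥ N, ∀ j < n, 0 ≤ (x (n - j) - c) * (T^[j+1] c - c)
  · -- infinitely many matches
    by_contra hne
    obtain ⟨N, hN⟩ := hsmall |x 0 - z 0| (abs_pos.2 (sub_ne_zero.2 hne))
    obtain ⟨n, hn, hM⟩ := hinf (N + 1)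
    have mx : x 0 ∈ D (n + 1) := by
      have := D_mem hs0 hT hnc hc1 D hD1 hDcut hDnot n (by omega) (x n)
        (by rw [← hx]; exact hle _) (fun j hj => by rw [hit' x hx n j hj.le]; exact hM j hj)
      rwa [hit' x hx n n le_rfl, Nat.sub_self] at this
    have mz : z 0 ∈ D (n + 1) := by
      have := D_mem hs0 hT hnc hc1 D hD1 hDcut hDnot n (by omega) (z n)
        (by rw [← hz]; exact hle _) (fun j hj => by
          rw [hit' z hz n j hj.le]
          refine hsign2 _ (x (n-j) - c) _ (sub_ne_zero.2 (hxc _ (by omega))) (hxz _ (by omega)) ?_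
          rw [mul_comm]; exact hM j hj)
      rwa [hit' z hz n n le_rfl, Nat.sub_self] at this
    exact lt_irrefl _ (hN (n+1) (by omega) _ mx _ mz)
  · exfalso
    push Not at hinf
    obtain ⟨N1, hN1⟩ := hinf
    have hpos : ∀ n, 0 < s ^ n * (T c - x n) := by
      intro n
      rw [← hx n, hdist]
      have := abs_pos.2 (sub_ne_zero.2 (hxc (n+1) (by omega)))
      positivity
    have hr : ∃ r > 0, ∀ n < N1, r ≤ s ^ n * (T c - x n) := by
      clear hN1
      induction N1 with
      | zero => exact ⟨1, one_pos, by simp⟩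
      | succ N ih =>
        obtain ⟨r, hr, h⟩ := ih
        refine ⟨min r (s ^ N * (T c - x N)), lt_min hr (hpos N), fun n hn => ?_⟩
        rcases Nat.lt_succ_iff_lt_or_eq.1 hn with h' | rfl
        · exact (min_le_left _ _).trans (h n h')
        · exact min_le_right _ _
    obtain ⟨r, hr0, hr⟩ := hr
    have hstep : ∀ m, r ≤ s ^ m * (T c - x m) → r ≤ s ^ (m+1) * |x (m+1) - c| := by
      intro m h
      rw [← hx m, hdist] at h
      rw [pow_succ, mul_assoc]; exact h
    have hall : ∀ n, r ≤ s ^ n * (T c - x n) := by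
      intro n
      induction n using Nat.strong_induction_on with
      | _ n ih =>
        by_cases hn : n < N1
        · exact hr n hn
        · by_contra hcon
          push Not at hcon
          obtain ⟨j, hj, hneg⟩ := hN1 n (by omega)
          have h1 := tent_iter_lip hs0 hT (T c) (x n) j
          rw [hit' x hx n j hj.le, ← Function.iterate_succ_apply,
            abs_of_nonneg (by rw [← hx]; linarith [hle (x (n+1))] : 0 ≤ T c - x n)] at h1
          have h2 := hstep (n - j - 1) (ih _ (by omega))
          rw [Nat.sub_add_cancel (by omega)] at h2
          have hp : 0 < s ^ (n - j) := by positivity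
          have h3 : s ^ (n-j) * s ^ j = s ^ n := by rw [← pow_add]; congr 1; omega
          have h4 : s ^ (n-j) * (s ^ j * (T c - x n)) < s ^ (n-j) * |x (n-j) - c| := by
            rw [← mul_assoc, h3]; linarith
          have h5 := lt_of_mul_lt_mul_left h4 hp.le
          have h6 := hsign _ _ _ h1 h5.le
          rw [mul_comm] at h6
          exact absurd h6 (not_le.2 hneg)
    obtain ⟨N, hN⟩ := hsmall (r/2) (by linarith)
    have hN' : ∀ n ≥ N + 1, ∀ u ∈ D n, ∀ v ∈ D n, |u - v| < r / 2 :=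
      fun n hn => hN n (by omega)
    clear hN
    generalize hNN : N + 1 = L at hN'
    have hL : 1 ≤ L := by omega
    have hsL : 0 < s ^ L := by positivity
    obtain ⟨k, hk1, hk⟩ := hω L (r / 2 / s ^ L) (by positivity)
    rw [lt_div_iff₀ hsL, mul_comm] at hk
    -- forward part
    have hfwd : ∀ j < L, r / 2 ≤ s ^ (L - j) * |T^[k + j] c - c| := by
      intro j hj
      have h1 := tent_iter_lip hs0 hT (T^[k] c) (x L) j
      rw [hit' x hx L j hj.le, ← Function.iterate_add_apply, add_comm j k] at h1
      have h2 := hstep (L - j - 1) (hall _)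
      rw [Nat.sub_add_cancel (by omega)] at h2
      have hp : 0 < s ^ (L - j) := by positivity
      have h3 : s ^ (L-j) * s ^ j = s ^ L := by rw [← pow_add]; congr 1; omega
      have h4 := mul_le_mul_of_nonneg_left h1 hp.le
      rw [← mul_assoc, h3] at h4
      have h5 := abs_sub_le (x (L - j)) (T^[k + j] c) c
      rw [abs_sub_comm (x (L-j)) (T^[k+j] c)] at h5
      have h6 := mul_le_mul_of_nonneg_left h5 hp.le
      rw [mul_add] at h6
      linarith
    -- backward part
    have hex : ∃ t, t < k ∧ s ^ (L + t) * (T c - T^[k - t] c) < r / 2 := by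
      refine ⟨k - 1, by omega, ?_⟩
      rw [show k - (k - 1) = 1 by omega]
      simp; exact hr0
    classical
    have hf := Nat.find_spec hex
    have hmin := fun t => @Nat.find_min _ _ hex t
    generalize Nat.find hex = t at hf hmin
    obtain ⟨htk, ht⟩ := hf
    obtain ⟨i, rfl⟩ : ∃ i, k = i + t := ⟨k - t, by omega⟩
    rw [Nat.add_sub_cancel] at ht
    have hi : 1 ≤ i := by omega
    have hfull : ∀ j < L + t, r / 2 ≤ s ^ (L + t - j) * |T^[i + j] c - c| := by
      intro j hj
      rcases lt_or_ge j t with hjt | hjt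
      · have h1 := hmin (t - j - 1) (by omega)
        push Not at h1
        have h1 := h1 (by omega)
        rw [show i + t - (t - j - 1) = (i + j) + 1 by omega, Function.iterate_succ_apply',
          hdist, ← mul_assoc, ← pow_succ, show L + (t - j - 1) + 1 = L + t - j by omega] at h1
        exact h1
      · have h1 := hfwd (j - t) (by omega)
        rw [show L - (j - t) = L + t - j by omega, show i + t + (j - t) = i + j by omega] at h1
        exact h1
    generalize hm : L + t = m at ht hfull
    have hsm : 0 < s ^ m := by positivity
    have hci : T^[i] c ≤ T c := by
      rw [show i = (i - 1) + 1 by omega, Function.iterate_succ_apply']; exact hle _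
    set δ := r / 2 / s ^ m with hδ
    have hδ0 : 0 < δ := by positivity
    have hδm : s ^ m * δ = r / 2 := by rw [hδ]; field_simp
    have hclose : ∀ q, |q - T^[i] c| ≤ δ → ∀ j < m, 0 ≤ (T^[j] q - c) * (T^[i + j] c - c) := by
      intro q hq j hj
      have h1 := tent_iter_lip hs0 hT q (T^[i] c) j
      rw [← Function.iterate_add_apply, add_comm j i] at h1
      have h2 := hfull j hj
      have hp : 0 < s ^ (m - j) := by positivity
      have hpj : 0 < s ^ j := by positivity
      have h3 : s ^ (m-j) * s ^ j = s ^ m := by rw [← pow_add]; congr 1; omega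
      refine hsign _ _ (s ^ j * δ) (h1.trans (mul_le_mul_of_nonneg_left hq hpj.le)) ?_
      refine le_of_mul_le_mul_left ?_ hp
      rw [← mul_assoc, h3, hδm]; exact h2
    have hcd : T c - T^[i] c < δ := by
      rw [← hδm] at ht
      exact lt_of_mul_lt_mul_left ht hsm.le
    have e1 := hclose (T c) (by rw [abs_of_nonneg (by linarith)]; exact hcd.le)
    have e2 := hclose (T c - δ) (by rw [abs_le]; constructor <;> linarith)
    have e3 : ∀ j < m, 0 ≤ (T^[j] (T c - δ) - c) * (T^[j] (T c) - c) := by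
      intro j hj
      refine hsign2 _ (T^[i+j] c - c) _ (sub_ne_zero.2 (hnc _ (by omega))) (e2 j hj) (e1 j hj)
    have mem1 := D_mem hs0 hT hnc hc1 D hD1 hDcut hDnot m (by omega) (T c - δ) (by linarith)
      (fun j hj => by rw [Function.iterate_succ_apply]; exact e3 j hj)
    have mem2 := D_mem hs0 hT hnc hc1 D hD1 hDcut hDnot m (by omega) (T c) le_rfl
      (fun j hj => by rw [Function.iterate_succ_apply]; exact mul_self_nonneg _)
    have h7 := hN' (m+1) (by omega) _ mem1 _ mem2
    rw [tent_iter_exact hs0 hT _ _ m e3, show T c - δ - T c = -δ by ring, abs_neg,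
      abs_of_pos hδ0, hδm] at h7
    exact lt_irrefl _ h7

end Helpers

/-- If the kneading map of a tent map satisfies `Q(k) → ∞`, then every
folding point of the core inverse limit `X′` lies in a degenerate basic arc (hence is a
spiral or nasty endpoint). -/
theorem stmt15 (s : ℝ) (hs : s ∈ Set.Ioc (Real.sqrt 2) 2) (T : ℝ → ℝ)
    (hT : ∀ x, T x = min (s * x) (s * (1 - x))) (c : ℝ) (hc : c = 1/2)
    (hnc : ∀ n, 1 ≤ n → T^[n] c ≠ c)
    (hinf : Function.Injective fun n : ℕ => T^[n] c)
    (D : ℕ → Set ℝ)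
    (hD1 : D 1 = Set.uIcc c (T c))
    (hDcut : ∀ n, 1 ≤ n → c ∈ D n → D (n + 1) = Set.uIcc (T^[n+1] c) (T c))
    (hDnot : ∀ n, 1 ≤ n → c ∉ D n → D (n + 1) = T '' D n)
    (S : ℕ → ℕ) (hS : StrictMono S) (hS0 : S 0 = 1)
    (hSrange : ∀ n, 1 ≤ n → (c ∈ D n ↔ n ∈ Set.range S))
    (Q : ℕ → ℕ) (hQ : ∀ k, 1 ≤ k → S k = S (k - 1) + S (Q k))
    (hQinf : Filter.Tendsto Q Filter.atTop Filter.atTop)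
    (K : Set ℝ) (hK : K = Set.Icc (T^[2] c) (T c))
    (F : Set (InvLim T K))
    (hF : F = {x : InvLim T K | ∀ n, x.1 n ∈ omegaSet T c}) :
    ∀ x ∈ F, (basicArcOf T K c x).Subsingleton := by
  have hs1 : 1 < s := by
    have h := hs.1
    have : (1:ℝ) ≤ Real.sqrt 2 := by
      rw [Real.le_sqrt (by norm_num) (by norm_num)]; norm_num
    linarith
  have hs2 := hs.2
  have hTc : T c = s / 2 := by
    rw [hT, hc, min_eq_left (by linarith)]; ring
  have hT' : ∀ y, T y = T c - s * |y - c| := by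
    intro y
    rw [hTc, hT, hc]
    rcases le_total y (1/2) with h | h
    · rw [abs_of_nonpos (by linarith), min_eq_left (by nlinarith)]; ring
    · rw [abs_of_nonneg (by linarith), min_eq_right (by nlinarith)]; ring
  have hc1 : c < T c := by rw [hTc, hc]; linarith
  have hb : ∀ n, T^[n] c ∈ Set.Icc (0:ℝ) 1 := by
    intro n
    induction n with
    | zero => rw [hc]; simp; norm_num
    | succ n ih =>
      rw [Function.iterate_succ_apply', hT]
      obtain ⟨h0, h1⟩ := ih
      refine ⟨le_min (by nlinarith) (by nlinarith), ?_⟩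
      rcases le_total (T^[n] c) (1/2) with h | h
      · exact (min_le_left _ _).trans (by nlinarith)
      · exact (min_le_right _ _).trans (by nlinarith)
  have hsmall : ∀ ε > 0, ∃ N, ∀ n ≥ N, ∀ u ∈ D n, ∀ v ∈ D n, |u - v| < ε := fun ε hε =>
    D_small hs1 hT' hb D hDcut hDnot S hS hS0 hSrange Q hQ hQinf ε hε
  intro x hxF
  rw [hF] at hxF
  have hdown : ∀ w : InvLim T K, ∀ j n, T^[j] (w.1 (n + j)) = w.1 n := by
    intro w j
    induction j with
    | zero => intro n; rfl
    | succ j ih =>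
      intro n
      rw [Function.iterate_succ_apply, ← add_assoc, w.2.2, ih]
  have hLex : ∃ L, ∀ n, L < n → x.1 n ≠ c := by
    by_cases h : ∃ l, x.1 l = c
    · obtain ⟨l, hl⟩ := h
      refine ⟨l, fun n hn hxn => ?_⟩
      have := hdown x (n - l) l
      rw [show l + (n - l) = n by omega, hxn, hl] at this
      exact hnc (n - l) (by omega) this
    · exact ⟨0, fun n _ hxn => h ⟨n, hxn⟩⟩
  obtain ⟨L, hL⟩ := hLex
  have hsub : {y : InvLim T K | ∀ i, 1 ≤ i → y.1 i = c ∨ (c < y.1 i ↔ c < x.1 i)} ⊆ {x} := by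
    intro z hz
    rw [Set.mem_singleton_iff]
    apply Subtype.ext
    funext n
    have h := core hs1 hT' hnc hc1 D hD1 hDcut hDnot hsmall
      (fun j => x.1 (n + L + j)) (fun j => z.1 (n + L + j))
      (fun j => x.2.2 (n + L + j)) (fun j => z.2.2 (n + L + j))
      (fun j ε hε => by
        obtain ⟨φ, hφ, hlim⟩ := hxF (n + L + j)
        obtain ⟨N, hN⟩ := Metric.tendsto_atTop.1 hlim ε hε
        refine ⟨φ (N + 1), ?_, hN (N + 1) (by omega)⟩
        have := hφ.le_apply (x := N + 1)
        omega)
      (fun j hj => hL _ (by omega))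
      (fun j hj => by
        rcases hz (n + L + j) (by omega) with h | h
        · simp [h]
        · rcases lt_or_ge c (x.1 (n + L + j)) with h' | h'
          · have := h.2 h'
            exact mul_nonneg (by linarith) (by linarith)
          · have : z.1 (n + L + j) ≤ c := by
              by_contra hcon
              push Not at hcon
              have := h.1 hcon
              linarith
            exact mul_nonneg_of_nonpos_of_nonpos (by linarith) (by linarith))
    simp only [add_zero] at h
    rw [← hdown x L n, ← hdown z L n, h]
  have hcl : basicArcOf T K c x ⊆ {x} := closure_minimal hsub isClosed_singleton
  exact Set.subsingleton_singleton.anti hcl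
end

section
/- If T = Q_a is an infinitely renormalisable logistic map, then the set of folding points of the core inverse limit X′ is a Cantor set consisting entirely of nasty endpoints: F = E_N, and every point of X′ not in this Cantor set is not a folding point. -/
open Set Filter Topology

/-- A subset of a topological space is an arc if it is the image of `[0,1]` under a
topological embedding. -/
def IsArc {Z : Type*} [TopologicalSpace Z] (A : Set Z) : Prop :=
  ∃ f : Set.Icc (0:ℝ) 1 → Z, Topology.IsEmbedding f ∧ Set.range f = A

namespace Stmt17

/-- The abstract properties of an infinitely renormalisable unimodal map that we use. -/
structure Ren (T : ℝ → ℝ) (c : ℝ) (p : ℕ → ℕ) (J : ℕ → ℕ → Set ℝ) (Ω : Set ℝ) : Prop where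
  cont : Continuous T
  max : ∀ x, T x ≤ T c
  mono : StrictMonoOn T (Iic c)
  anti : StrictAntiOn T (Ici c)
  two_le : ∀ i, 2 ≤ p i
  p_ge : ∀ i, i < p i
  mem0 : ∀ i, c ∈ J i 0
  oc : ∀ i k, (J i k).OrdConnected
  map : ∀ i, ∀ k < p i, ∀ u ∈ J i k, T u ∈ J i ((k + 1) % p i)
  disj : ∀ i, ∀ k < p i, ∀ l < p i, ∀ u, u ∈ J i k → u ∈ J i l → k = l
  small : ∀ ε > 0, ∀ᶠ i in atTop, ∀ k < p i, ∀ u ∈ J i k, ∀ v ∈ J i k, dist u v < ε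
  mem : ∀ u, u ∈ Ω ↔ ∀ i, ∃ k < p i, u ∈ J i k
  closed : IsClosed Ω

section abstract
variable {T : ℝ → ℝ} {c : ℝ} {p : ℕ → ℕ} {J : ℕ → ℕ → Set ℝ} {Ω : Set ℝ}

lemma Ren.iter (h : Ren T c p J Ω) (i j : ℕ) : ∀ k < p i, ∀ u ∈ J i k,
    T^[j] u ∈ J i ((k + j) % p i) := by
  induction j with
  | zero => intro k hk u hu; simpa [Nat.mod_eq_of_lt hk] using hu
  | succ j ih =>
    intro k hk u hu
    have h2 := h.two_le i
    rw [Function.iterate_succ_apply']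
    have := h.map i _ (Nat.mod_lt (k + j) (by omega)) _ (ih k hk u hu)
    rwa [Nat.mod_add_mod, add_assoc] at this

lemma Ren.mapsΩ (h : Ren T c p J Ω) {u : ℝ} (hu : u ∈ Ω) : T u ∈ Ω := by
  rw [h.mem] at hu ⊢
  intro i
  obtain ⟨k, hk, hku⟩ := hu i
  have h2 := h.two_le i
  exact ⟨_, Nat.mod_lt _ (by omega), h.map i k hk u hku⟩

lemma Ren.noper (h : Ren T c p J Ω) {u : ℝ} (hu : u ∈ Ω) {q : ℕ} (hq : 0 < q) :
    T^[q] u ≠ u := by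
  intro e
  obtain ⟨k, hk, hku⟩ := (h.mem u).1 hu q
  have h1 := h.iter q q k hk u hku
  rw [e] at h1
  have hpq := h.p_ge q
  have h3 := h.disj q k hk _ (Nat.mod_lt _ (by omega)) u hku h1
  by_cases hlt : k + q < p q
  · rw [Nat.mod_eq_of_lt hlt] at h3; omega
  · rw [Nat.mod_eq_sub_mod (by omega), Nat.mod_eq_of_lt (by omega)] at h3; omega

/-- `J i k` for `k ≠ 0` lies on one side of `c`. -/
lemma Ren.side (h : Ren T c p J Ω) (i : ℕ) {k : ℕ} (hk : k < p i) (hk0 : k ≠ 0) :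
    (∀ u ∈ J i k, u < c) ∨ (∀ u ∈ J i k, c < u) := by
  have hc : c ∉ J i k := fun hc => hk0 (h.disj i k hk 0 (by omega) c hc (h.mem0 i))
  by_contra hcon
  push Not at hcon
  obtain ⟨⟨u, hu, hu'⟩, v, hv, hv'⟩ := hcon
  exact hc ((h.oc i k).out hv hu ⟨hv', hu'⟩)

lemma Ren.branch (h : Ren T c p J Ω) (i j : ℕ) (hj : j + 1 ≤ p i) :
    MonotoneOn (T^[j]) (J i (1 % p i)) ∨ AntitoneOn (T^[j]) (J i (1 % p i)) := by
  have h2 := h.two_le i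
  rw [Nat.mod_eq_of_lt (by omega : 1 < p i)]
  induction j with
  | zero => left; simpa using (monotone_id.monotoneOn _)
  | succ j ih =>
    have hm : MapsTo (T^[j]) (J i 1) (J i (1 + j)) := by
      intro u hu
      have := h.iter i j 1 (by omega) u hu
      rwa [Nat.mod_eq_of_lt (by omega)] at this
    have hT : MonotoneOn T (J i (1 + j)) ∨ AntitoneOn T (J i (1 + j)) := by
      rcases h.side i (k := 1 + j) (by omega) (by omega) with hs | hs
      · left; exact h.mono.monotoneOn.mono (fun u hu => (hs u hu).le)
      · right; exact h.anti.antitoneOn.mono (fun u hu => (hs u hu).le)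
    rw [Function.iterate_succ']
    rcases hT with hT | hT <;> rcases ih (by omega) with hi | hi
    · left; exact hT.comp hi hm
    · right; exact fun u hu v hv huv => hT (hm hv) (hm hu) (hi hu hv huv)
    · right; exact fun u hu v hv huv => hT (hm hu) (hm hv) (hi hu hv huv)
    · left; exact hT.comp hi hm

/-- `kk` records the indices of the intervals of level `i` containing the points `x n`. -/
structure Track (T : ℝ → ℝ) (p : ℕ → ℕ) (J : ℕ → ℕ → Set ℝ) (Ω : Set ℝ) (x : ℕ → ℝ) (i : ℕ)
    (kk : ℕ → ℕ) : Prop where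
  orb : ∀ n, T (x (n + 1)) = x n
  om : ∀ n, x n ∈ Ω
  lt : ∀ n, kk n < p i
  mem : ∀ n, x n ∈ J i (kk n)

lemma Ren.track (h : Ren T c p J Ω) {x : ℕ → ℝ} (ho : ∀ n, T (x (n + 1)) = x n)
    (hx : ∀ n, x n ∈ Ω) : ∃ kk : ℕ → ℕ → ℕ, ∀ i, Track T p J Ω x i (kk i) := by
  have : ∀ i n, ∃ k < p i, x n ∈ J i k := fun i n => (h.mem _).1 (hx n) i
  choose kk hkk using this
  exact ⟨kk, fun i => ⟨ho, hx, fun n => (hkk i n).1, fun n => (hkk i n).2⟩⟩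

lemma orb_iter {y : ℕ → ℝ} (ho : ∀ n, T (y (n + 1)) = y n) (n j : ℕ) :
    T^[j] (y (n + j)) = y n := by
  induction j with
  | zero => rfl
  | succ j ih => rw [Function.iterate_succ_apply, ← add_assoc, ho, ih]

variable {x : ℕ → ℝ} {i : ℕ} {kk : ℕ → ℕ}

lemma Track.idxShift (h : Ren T c p J Ω) (t : Track T p J Ω x i kk) (n j : ℕ) :
    kk n = (kk (n + j) + j) % p i := by
  have h2 := h.two_le i
  have := h.iter i j _ (t.lt (n + j)) _ (t.mem (n + j))
  rw [orb_iter t.orb] at this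
  exact h.disj i _ (t.lt n) _ (Nat.mod_lt _ (by omega)) _ (t.mem n) this

lemma Track.freq (h : Ren T c p J Ω) (t : Track T p J Ω x i kk) : ∃ᶠ n in atTop, kk n = 0 := by
  rw [frequently_atTop]
  intro N
  refine ⟨N + kk N, by simp, ?_⟩
  have h1 := t.idxShift h N (kk N)
  have h2 := t.lt N
  have h3 := t.lt (N + kk N)
  by_cases hlt : kk (N + kk N) + kk N < p i
  · rw [Nat.mod_eq_of_lt hlt] at h1; omega
  · rw [Nat.mod_eq_sub_mod (by omega), Nat.mod_eq_of_lt (by omega)] at h1; omega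

lemma Track.pred (h : Ren T c p J Ω) (t : Track T p J Ω x i kk) {n : ℕ} (hn : kk (n + 1) = 0) :
    kk n = 1 := by
  have h2 := h.two_le i
  have := t.idxShift h n 1
  rw [hn, Nat.mod_eq_of_lt (by omega)] at this
  omega

/-- a point leaving the level `i` box lies below `x` at index 1. -/
lemma Track.below (h : Ren T c p J Ω) (t : Track T p J Ω x i kk) {n : ℕ} (hn : kk n = 1)
    {y : ℝ} (hy : y ≤ T c) (hyJ : y ∉ J i (kk n)) : y < x n := by
  by_contra hcon
  push Not at hcon
  have h2 := h.two_le i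
  have hTc : T c ∈ J i (kk n) := by
    have := h.map i 0 (by omega) c (h.mem0 i)
    rwa [Nat.mod_eq_of_lt (by omega), zero_add, ← hn] at this
  exact hyJ ((h.oc i _).out (t.mem n) hTc ⟨hcon, hy⟩)

/-- A point that differs from `x` eventually leaves the boxes. -/
lemma Ren.leave (h : Ren T c p J Ω) {kk : ℕ → ℕ → ℕ} (t : ∀ i, Track T p J Ω x i (kk i))
    {y : ℕ → ℝ} (hy : ∀ n, T (y (n + 1)) = y n) (hne : y ≠ x) :
    ∀ᶠ i in atTop, ∀ᶠ n in atTop, y n ∉ J i (kk i n) := by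
  obtain ⟨M, hM⟩ : ∃ M, y M ≠ x M := by
    by_contra hcon; push Not at hcon; exact hne (funext hcon)
  filter_upwards [h.small _ (dist_pos.2 hM)] with i hi
  filter_upwards [eventually_ge_atTop M] with n hn hmem
  obtain ⟨j, rfl⟩ := Nat.exists_eq_add_of_le hn
  have h1 := h.iter i j _ ((t i).lt _) _ hmem
  rw [orb_iter hy, ← (t i).idxShift h] at h1
  exact lt_irrefl _ (hi _ ((t i).lt M) _ h1 _ ((t i).mem M))

/-- backward orbits of a monotone branch converge to a periodic point. -/
lemma Ren.nomono (h : Ren T c p J Ω) {z : ℕ → ℝ} (hz : ∀ n, z n ∈ Ω) {S : Set ℝ}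
    (hzS : ∀ n, z n ∈ S) (hb : Bornology.IsBounded S) {q : ℕ} (hq : 0 < q)
    (hzq : ∀ n, T^[q] (z (n + 1)) = z n)
    (hm : MonotoneOn (T^[q]) S) : False := by
  have hlim : ∃ l, Tendsto z atTop (𝓝 l) := by
    have hne : ∀ n, z n ≠ z (n + 1) := by
      intro n e
      exact h.noper (hz (n + 1)) hq ((hzq n).trans e)
    have hbr : Bornology.IsBounded (range z) := hb.subset (by rintro _ ⟨n, rfl⟩; exact hzS n)
    rcases le_total (z 0) (z 1) with h01 | h01
    · have : Monotone z := by
        apply monotone_nat_of_le_succ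
        intro n
        induction n with
        | zero => exact h01
        | succ n ih =>
          by_contra hcon
          push Not at hcon
          have := hm (hzS _) (hzS _) hcon.le
          rw [hzq, hzq] at this
          exact hne n (le_antisymm ih this)
      exact ⟨_, tendsto_atTop_ciSup this hbr.bddAbove⟩
    · have : Antitone z := by
        apply antitone_nat_of_succ_le
        intro n
        induction n with
        | zero => exact h01
        | succ n ih =>
          by_contra hcon
          push Not at hcon
          have := hm (hzS _) (hzS _) hcon.le
          rw [hzq, hzq] at this
          exact hne n (le_antisymm this ih)
      exact ⟨_, tendsto_atTop_ciInf this hbr.bddBelow⟩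
  obtain ⟨l, hl⟩ := hlim
  have hlΩ : l ∈ Ω := h.closed.mem_of_tendsto hl (Eventually.of_forall hz)
  refine h.noper hlΩ hq ?_
  have h1 : Tendsto (fun n => T^[q] (z (n + 1))) atTop (𝓝 (T^[q] l)) :=
    ((h.cont.iterate q).tendsto l).comp (hl.comp (tendsto_add_atTop_nat 1))
  simp only [hzq] at h1
  exact tendsto_nhds_unique h1 hl

lemma Track.nosideAux (h : Ren T c p J Ω) (t : Track T p J Ω x i kk) {S : Set ℝ}
    (hSb : Bornology.IsBounded S) (hS : S ⊆ J i 0) (hTS : MonotoneOn T S ∨ AntitoneOn T S)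
    (hx : ∀ᶠ n in atTop, kk n = 0 → x n ∈ S) : False := by
  have h2 := h.two_le i
  obtain ⟨n0, hn0, hall⟩ := ((t.freq h).and_eventually (eventually_forall_ge_atTop.2 hx)).exists
  have hper : ∀ r, kk (n0 + p i * r) = 0 := by
    intro r
    have := t.idxShift h n0 (p i * r)
    rw [hn0, Nat.add_mul_mod_self_left, Nat.mod_eq_of_lt (t.lt _)] at this
    exact this.symm
  have hzS : ∀ r, x (n0 + p i * r) ∈ S := fun r => hall _ (by omega) (hper r)
  set z : ℕ → ℝ := fun r => x (n0 + p i * r) with hzdef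
  have hz1 : ∀ r, T^[p i] (z (r + 1)) = z r := by
    intro r
    have := orb_iter t.orb (n0 + p i * r) (p i)
    simpa [hzdef, mul_add, add_assoc] using this
  have hbr : MonotoneOn (T^[p i]) S ∨ AntitoneOn (T^[p i]) S := by
    have hmaps : MapsTo T S (J i (1 % p i)) := by
      intro u hu
      simpa using h.map i 0 (by omega) u (hS hu)
    have e : T^[p i] = T^[p i - 1] ∘ T := by
      rw [← Function.iterate_succ]; congr 1; omega
    rw [e]
    rcases hTS with hT | hT <;> rcases h.branch i (p i - 1) (by omega) with hi | hi
    · left; exact hi.comp hT hmaps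
    · right; exact fun u hu v hv huv => hi (hmaps hu) (hmaps hv) (hT hu hv huv)
    · right; exact fun u hu v hv huv => hi (hmaps hv) (hmaps hu) (hT hu hv huv)
    · left; exact hi.comp hT hmaps
  rcases hbr with hm | hm
  · exact h.nomono (fun n => t.om _) hzS hSb (by omega : 0 < p i) hz1 hm
  · set S' : Set ℝ := {u | ∃ r, u = z (2 * r + 1 + 1)} with hS'
    have e2 : T^[p i * 2] = T^[p i] ∘ T^[p i] := by
      rw [mul_two, Function.iterate_add]
    refine h.nomono (z := fun r => z (2 * r + 1 + 1)) (S := S') (q := p i * 2) (fun n => t.om _)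
      (fun n => ⟨n, rfl⟩) (hSb.subset ?_) (by omega) ?_ ?_
    · rintro _ ⟨r, rfl⟩; exact hzS _
    · intro n
      simp only [e2, Function.comp]
      rw [show 2 * (n + 1) = 2 * n + 1 + 1 by ring, hz1, hz1]
    · rintro u ⟨r, rfl⟩ v ⟨s, rfl⟩ huv
      simp only [e2, Function.comp]
      refine hm ?_ ?_ (hm (hzS _) (hzS _) huv)
      · rw [hz1]; exact hzS _
      · rw [hz1]; exact hzS _

/-- The points `x n` at index 0 cannot stay on one side of `c`. -/
lemma Track.noside (h : Ren T c p J Ω) (hJb : Bornology.IsBounded (J i 0))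
    (t : Track T p J Ω x i kk)
    (hx : (∀ᶠ n in atTop, kk n = 0 → x n ≤ c) ∨ (∀ᶠ n in atTop, kk n = 0 → c ≤ x n)) :
    False := by
  rcases hx with hx | hx
  · refine t.nosideAux h (S := J i 0 ∩ Iic c) (hJb.subset inter_subset_left) inter_subset_left
      (Or.inl (h.mono.monotoneOn.mono inter_subset_right)) ?_
    filter_upwards [hx] with n hn h0
    exact ⟨h0 ▸ t.mem n, hn h0⟩
  · refine t.nosideAux h (S := J i 0 ∩ Ici c) (hJb.subset inter_subset_left) inter_subset_left
      (Or.inr (h.anti.antitoneOn.mono inter_subset_right)) ?_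
    filter_upwards [hx] with n hn h0
    exact ⟨h0 ▸ t.mem n, hn h0⟩

variable {K : Set ℝ}

/-- projection of a subset of the inverse limit -/
def pr (A : Set (InvLim T K)) (n : ℕ) : Set ℝ := (fun z : InvLim T K => z.1 n) '' A

lemma pr_oc {A : Set (InvLim T K)} (hA : IsConnected A) (n : ℕ) : (pr A n).OrdConnected := by
  apply IsPreconnected.ordConnected
  exact hA.isPreconnected.image _ ((continuous_apply n).comp continuous_subtype_val).continuousOn

lemma pr_iter {A : Set (InvLim T K)} {n j : ℕ} {u : ℝ} (hu : u ∈ pr A (n + j)) :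
    T^[j] u ∈ pr A n := by
  obtain ⟨z, hz, rfl⟩ := hu
  exact ⟨z, hz, (orb_iter z.2.2 n j).symm⟩

/-- a point whose projections frequently lie in those of a compact set is in that set -/
lemma mem_of_freq {A : Set (InvLim T K)} (hA : IsCompact A) {y : InvLim T K}
    (hy : ∃ᶠ n in atTop, y.1 n ∈ pr A n) : y ∈ A := by
  have hall : ∀ n, y.1 n ∈ pr A n := by
    intro n
    obtain ⟨m, hm, hym⟩ := (frequently_atTop.1 hy) n
    obtain ⟨j, rfl⟩ := Nat.exists_eq_add_of_le hm
    have := pr_iter hym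
    rwa [orb_iter y.2.2] at this
  choose z hzA hz using hall
  have : FirstCountableTopology (InvLim T K) :=
    TopologicalSpace.firstCountableTopology_induced _ _ Subtype.val
  obtain ⟨w, hwA, φ, hφ, hw⟩ := hA.tendsto_subseq hzA
  suffices w = y by rwa [← this]
  apply Subtype.ext
  funext n
  have h1 : Tendsto (fun m => (z (φ m)).1 n) atTop (𝓝 (w.1 n)) :=
    (((continuous_apply n).comp continuous_subtype_val).tendsto w).comp hw
  refine tendsto_nhds_unique h1 (tendsto_const_nhds.congr' ?_)
  filter_upwards [eventually_ge_atTop n] with m hm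
  obtain ⟨j, hj⟩ := Nat.exists_eq_add_of_le (hm.trans (hφ.id_le m))
  have h3 : (z (φ m)).1 (φ m) = y.1 (φ m) := hz (φ m)
  have h4 := orb_iter (z (φ m)).2.2 n j
  rw [show n + j = φ m from hj.symm, h3, show φ m = n + j from hj, orb_iter y.2.2] at h4
  rw [show φ m = n + j from hj]
  exact h4

/-- Every point of the set `F` is an endpoint. -/
lemma Ren.endpoint (h : Ren T c p J Ω) {x : InvLim T K} (hx : ∀ n, x.1 n ∈ Ω) :
    IsEndpointPt x := by
  intro A B hAc hA hBc hB hxA hxB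
  by_contra hcon
  push Not at hcon
  obtain ⟨hAB, hBA⟩ := hcon
  obtain ⟨y, hyA, hyB⟩ := not_subset.1 hAB
  obtain ⟨w, hwB, hwA⟩ := not_subset.1 hBA
  obtain ⟨kk, t⟩ := h.track x.2.2 hx
  have hyx : y.1 ≠ x.1 := fun e => hyB (by rwa [Subtype.ext e])
  have hwx : w.1 ≠ x.1 := fun e => hwA (by rwa [Subtype.ext e])
  obtain ⟨i, hyi, hwi⟩ := ((h.leave t y.2.2 hyx).and (h.leave t w.2.2 hwx)).exists
  have hyB' : ∀ᶠ n in atTop, y.1 n ∉ pr B n := by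
    by_contra hc; exact hyB (mem_of_freq hBc (by simpa [Filter.Frequently] using hc))
  have hwA' : ∀ᶠ n in atTop, w.1 n ∉ pr A n := by
    by_contra hc; exact hwA (mem_of_freq hAc (by simpa [Filter.Frequently] using hc))
  obtain ⟨N, hN⟩ := eventually_atTop.1 ((hyi.and hwi).and (hyB'.and hwA'))
  obtain ⟨m, hmN, hm0⟩ := frequently_atTop.1 ((t i).freq h) (N + 1)
  obtain ⟨n, rfl⟩ : ∃ n, m = n + 1 := ⟨m - 1, by omega⟩
  have hn1 := (t i).pred h hm0
  obtain ⟨⟨h1, h2⟩, h3, h4⟩ := hN n (by omega)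
  have hy := (t i).below h hn1 (by rw [← y.2.2 n]; exact h.max _) h1
  have hw := (t i).below h hn1 (by rw [← w.2.2 n]; exact h.max _) h2
  rcases le_total (y.1 n) (w.1 n) with hle | hle
  · exact h4 ((pr_oc hA n).out ⟨y, hyA, rfl⟩ ⟨x, hxA, rfl⟩ ⟨hle, hw.le⟩)
  · exact h3 ((pr_oc hB n).out ⟨w, hwB, rfl⟩ ⟨x, hxB, rfl⟩ ⟨hle, hy.le⟩)

/-- case where `A` avoids `c` at index 0 -/
lemma Ren.avoid (h : Ren T c p J Ω) {x y : InvLim T K} {A : Set (InvLim T K)}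
    (hA : IsConnected A) (hxA : x ∈ A) (hyA : y ∈ A) {i : ℕ} {kk : ℕ → ℕ}
    (hJb : Bornology.IsBounded (J i 0)) (t : Track T p J Ω x.1 i kk)
    (hy : ∀ᶠ n in atTop, y.1 n ∉ J i (kk n))
    (hc : ∀ᶠ n in atTop, kk n = 0 → c ∉ pr A n) : False := by
  have h2 := h.two_le i
  have hxn : ∀ n, x.1 n ∈ pr A n := fun n => ⟨x, hxA, rfl⟩
  have hyn : ∀ n, y.1 n ∈ pr A n := fun n => ⟨y, hyA, rfl⟩
  -- points of `A` on the other side of `c` are impossible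
  have hlt : ∀ n u, c ∉ pr A n → u ∈ pr A n → u < c → x.1 n < c := by
    intro n u hcA hu huc
    by_contra hcon
    push Not at hcon
    exact hcA ((pr_oc hA n).out hu (hxn n) ⟨huc.le, hcon⟩)
  have hgt : ∀ n u, c ∉ pr A n → u ∈ pr A n → c < u → c < x.1 n := by
    intro n u hcA hu huc
    by_contra hcon
    push Not at hcon
    exact hcA ((pr_oc hA n).out (hxn n) hu ⟨hcon, huc.le⟩)
  by_cases hk : ∃ k, k < p i ∧ k ≠ 0 ∧ ∃ᶠ n in atTop, kk n = k ∧ c ∈ pr A n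
  · obtain ⟨k, hkp, hk0, hf⟩ := hk
    have hpt : ∀ m, kk m = 0 → ∃ u ∈ pr A m, u ∈ J i (p i - k) := by
      intro m hm
      obtain ⟨n, hmn, hnk, hcn⟩ := frequently_atTop.1 hf m
      obtain ⟨j, rfl⟩ := Nat.exists_eq_add_of_le hmn
      refine ⟨_, pr_iter hcn, ?_⟩
      have h3 := h.iter i j 0 (by omega) c (h.mem0 i)
      have h4 := t.idxShift h m j
      rw [hm, hnk] at h4
      have h5 : (0 + j) % p i = p i - k := by
        rw [zero_add]
        have h6 := Nat.mod_lt j (by omega : 0 < p i)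
        rw [← Nat.add_mod_mod] at h4
        by_cases hl : k + j % p i < p i
        · rw [Nat.mod_eq_of_lt hl] at h4; omega
        · rw [Nat.mod_eq_sub_mod (by omega), Nat.mod_eq_of_lt (by omega)] at h4; omega
      rwa [h5] at h3
    refine t.noside h hJb ?_
    rcases h.side i (k := p i - k) (by omega) (by omega) with hs | hs
    · left
      filter_upwards [hc] with n hn h0
      obtain ⟨u, hu, huJ⟩ := hpt n h0
      exact (hlt n u (hn h0) hu (hs u huJ)).le
    · right
      filter_upwards [hc] with n hn h0
      obtain ⟨u, hu, huJ⟩ := hpt n h0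
      exact (hgt n u (hn h0) hu (hs u huJ)).le
  · have hall : ∀ᶠ n in atTop, c ∉ pr A n := by
      have h1 : ∀ᶠ n in atTop, ∀ k ∈ Finset.range (p i), k ≠ 0 → kk n = k → c ∉ pr A n := by
        rw [Filter.eventually_all_finset]
        intro k hkr
        rw [Finset.mem_range] at hkr
        by_cases hk0 : k = 0
        · exact Eventually.of_forall (fun n h' => absurd hk0 h')
        · by_contra hcon
          refine hk ⟨k, hkr, hk0, ?_⟩
          refine (not_eventually.1 hcon).mono ?_
          intro n hn
          push Not at hn
          exact hn.2
      filter_upwards [h1, hc] with n hn1 hn2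
      by_cases h0 : kk n = 0
      · exact hn2 h0
      · exact hn1 _ (Finset.mem_range.2 (t.lt n)) h0 rfl
    obtain ⟨M, hM⟩ := eventually_atTop.1 (hall.and hy)
    have step : ∀ j, j + 1 ≤ p i → (∀ m ≥ M, kk (m + j) = 1 → kk (m + j + 1) = 0 → y.1 m < x.1 m) ∨
        (∀ m ≥ M, kk (m + j) = 1 → kk (m + j + 1) = 0 → x.1 m < y.1 m) := by
      intro j
      induction j with
      | zero =>
        intro _
        left
        intro m hm h1 _
        exact t.below h h1 (by rw [← y.2.2 m]; exact h.max _) (hM m hm).2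
      | succ j ih =>
        intro hj
        have hidx : ∀ m, kk (m + (j + 1)) = 1 → kk (m + 1) = 1 + j := by
          intro m hm
          have := t.idxShift h (m + 1) j
          rwa [show m + 1 + j = m + (j + 1) by ring, hm, Nat.mod_eq_of_lt (by omega)] at this
        rcases h.side i (k := 1 + j) (by omega) (by omega) with hs | hs
        · have key : ∀ m ≥ M, kk (m + (j + 1)) = 1 → x.1 (m + 1) < c ∧ y.1 (m + 1) < c := by
            intro m hm h1
            have hx1 : x.1 (m + 1) < c := hs _ (hidx m h1 ▸ t.mem (m + 1))
            refine ⟨hx1, ?_⟩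
            by_contra hcon
            push Not at hcon
            exact (hM (m + 1) (by omega)).1
              ((pr_oc hA _).out (hxn _) (hyn _) ⟨hx1.le, hcon⟩)
          refine (ih (by omega)).imp ?_ ?_
          all_goals
            intro hi m hm h1 h0
            have h3 := hi (m + 1) (by omega) (by rwa [show m + 1 + j = m + (j + 1) by ring])
              (by rwa [show m + 1 + j = m + (j + 1) by ring])
            obtain ⟨ha, hb⟩ := key m hm h1
            rw [← x.2.2 m, ← y.2.2 m]
          · exact h.mono hb.le ha.le h3
          · exact h.mono ha.le hb.le h3
        · have key : ∀ m ≥ M, kk (m + (j + 1)) = 1 → c < x.1 (m + 1) ∧ c < y.1 (m + 1) := by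
            intro m hm h1
            have hx1 : c < x.1 (m + 1) := hs _ (hidx m h1 ▸ t.mem (m + 1))
            refine ⟨hx1, ?_⟩
            by_contra hcon
            push Not at hcon
            exact (hM (m + 1) (by omega)).1
              ((pr_oc hA _).out (hyn _) (hxn _) ⟨hcon, hx1.le⟩)
          refine (ih (by omega)).symm.imp ?_ ?_
          all_goals
            intro hi m hm h1 h0
            have h3 := hi (m + 1) (by omega) (by rwa [show m + 1 + j = m + (j + 1) by ring])
              (by rwa [show m + 1 + j = m + (j + 1) by ring])
            obtain ⟨ha, hb⟩ := key m hm h1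
            rw [← x.2.2 m, ← y.2.2 m]
          · exact h.anti ha.le hb.le h3
          · exact h.anti hb.le ha.le h3
    have hidx0 : ∀ m, kk m = 0 → kk (m + (p i - 1)) = 1 ∧ kk (m + (p i - 1) + 1) = 0 := by
      intro m hm
      have h3 := t.idxShift h m (p i)
      rw [hm, Nat.add_mod_right, Nat.mod_eq_of_lt (t.lt _)] at h3
      have h4 : kk (m + (p i - 1) + 1) = 0 := by
        rw [show m + (p i - 1) + 1 = m + p i by omega]; exact h3.symm
      exact ⟨t.pred h h4, h4⟩
    refine t.noside h hJb ?_
    refine (step (p i - 1) (by omega)).imp ?_ ?_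
    · intro hs
      filter_upwards [eventually_ge_atTop M] with m hm h0
      have h3 := hs m hm (hidx0 m h0).1 (hidx0 m h0).2
      obtain ⟨hcA, hyJ⟩ := hM m hm
      refine (hlt m _ hcA (hyn m) ?_).le
      by_contra hcon
      push Not at hcon
      exact hyJ ((h.oc i _).out (by rw [h0]; exact h.mem0 i) (t.mem m) ⟨hcon, h3.le⟩)
    · intro hs
      filter_upwards [eventually_ge_atTop M] with m hm h0
      have h3 := hs m hm (hidx0 m h0).1 (hidx0 m h0).2
      obtain ⟨hcA, hyJ⟩ := hM m hm
      refine (hgt m _ hcA (hyn m) ?_).le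
      by_contra hcon
      push Not at hcon
      exact hyJ ((h.oc i _).out (t.mem m) (by rw [h0]; exact h.mem0 i) ⟨h3.le, hcon⟩)

/-- A nondegenerate continuum through a point of `F` contains a neighbourhood of it in `F`. -/
lemma Ren.contains (h : Ren T c p J Ω) (hJb : ∀ i, Bornology.IsBounded (J i 0))
    {x y : InvLim T K} (hx : ∀ n, x.1 n ∈ Ω) {A : Set (InvLim T K)} (hAc : IsCompact A)
    (hA : IsConnected A) (hxA : x ∈ A) (hyA : y ∈ A) (hyx : y ≠ x) :
    ∃ i k, k < p i ∧ x.1 0 ∈ J i k ∧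
      ∀ w : InvLim T K, (∀ n, w.1 n ∈ Ω) → w.1 0 ∈ J i k → w ∈ A := by
  obtain ⟨kk, t⟩ := h.track x.2.2 hx
  obtain ⟨i, hyi⟩ := (h.leave t y.2.2 (fun e => hyx (Subtype.ext e))).exists
  refine ⟨i, kk i 0, (t i).lt 0, (t i).mem 0, ?_⟩
  intro w hw hw0
  have hfr : ∃ᶠ n in atTop, kk i n = 0 ∧ c ∈ pr A n := by
    by_contra hcon
    refine h.avoid hA hxA hyA (hJb i) (t i) hyi ?_
    filter_upwards [not_frequently.1 hcon] with n hn h0 hcA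
    exact hn ⟨h0, hcA⟩
  have h2 := h.two_le i
  obtain ⟨kw, tw⟩ := h.track w.2.2 hw
  have hkw : ∀ n, kw i n = kk i n := by
    intro n
    have h0 : kw i 0 = kk i 0 :=
      h.disj i _ ((tw i).lt 0) _ ((t i).lt 0) _ ((tw i).mem 0) hw0
    have h3 := (tw i).idxShift h 0 n
    have h4 := (t i).idxShift h 0 n
    rw [zero_add] at h3 h4
    have h5 : (kw i n + n) ≡ (kk i n + n) [MOD p i] := by
      unfold Nat.ModEq; rw [← h3, ← h4, h0]
    have h6 := Nat.ModEq.add_right_cancel' n h5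
    exact Nat.ModEq.eq_of_lt_of_lt h6 ((tw i).lt n) ((t i).lt n)
  apply mem_of_freq hAc
  rw [frequently_atTop]
  intro N
  obtain ⟨M, hM⟩ := eventually_atTop.1 hyi
  obtain ⟨m, hm, hm0, hmc⟩ := frequently_atTop.1 hfr (N + M + 1)
  obtain ⟨n, rfl⟩ : ∃ n, m = n + 1 := ⟨m - 1, by omega⟩
  refine ⟨n, by omega, ?_⟩
  have hn1 := (t i).pred h hm0
  have hTc : T c ∈ pr A n := by simpa using pr_iter (j := 1) hmc
  have hyw : y.1 n < w.1 n := by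
    refine (tw i).below h (by rw [hkw]; exact hn1) (by rw [← y.2.2 n]; exact h.max _) ?_
    rw [hkw]; exact hM n (by omega)
  exact (pr_oc hA n).out ⟨y, hyA, rfl⟩ hTc ⟨hyw.le, by rw [← w.2.2 n]; exact h.max _⟩

lemma invlim_of_right_inverse {Ω : Set ℝ} (hΩK : Ω ⊆ K) (hmap : ∀ u ∈ Ω, T u ∈ Ω)
    (hsurj : ∀ u ∈ Ω, ∃ v ∈ Ω, T v = u) {u : ℝ} (hu : u ∈ Ω) (N : ℕ) :
    ∃ y : InvLim T K, (∀ n, y.1 n ∈ Ω) ∧ y.1 N = u := by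
  choose! r hr hTr using hsurj
  have h1 : ∀ n, r^[n] u ∈ Ω := by
    intro n
    induction n with
    | zero => exact hu
    | succ n ih => rw [Function.iterate_succ_apply']; exact hr _ ih
  have h2 : ∀ m, ∀ v ∈ Ω, T^[m] v ∈ Ω := by
    intro m
    induction m with
    | zero => intro v hv; exact hv
    | succ m ih => intro v hv; rw [Function.iterate_succ_apply']; exact hmap _ (ih v hv)
  have h3 : ∀ n, T (r^[n + 1] u) = r^[n] u := by
    intro n
    rw [Function.iterate_succ_apply']; exact hTr _ (h1 n)
  refine ⟨⟨fun n => T^[N] (r^[n] u), fun n => hΩK (h2 _ _ (h1 n)), fun n => ?_⟩,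
    fun n => h2 _ _ (h1 n), ?_⟩
  · rw [← Function.iterate_succ_apply' T, Function.iterate_succ_apply T, h3]
  · have := orb_iter (y := fun n => r^[n] u) h3 0 N
    simpa using this

lemma preperfect_F {Ω : Set ℝ} (hT : Continuous T) (hΩK : Ω ⊆ K) (hmap : ∀ u ∈ Ω, T u ∈ Ω)
    (hsurj : ∀ u ∈ Ω, ∃ v ∈ Ω, T v = u) (hacc : Preperfect Ω) :
    Preperfect {x : InvLim T K | ∀ n, x.1 n ∈ Ω} := by
  intro x hx
  have key : ∀ N : ℕ, ∃ y : InvLim T K, (∀ n, y.1 n ∈ Ω) ∧ y ≠ x ∧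
      ∀ j ≤ N, dist (y.1 j) (x.1 j) < 1 / ((N : ℝ) + 1) := by
    intro N
    have hnb : {u | ∀ j ∈ Finset.range (N + 1),
        dist (T^[N - j] u) (x.1 j) < 1 / ((N : ℝ) + 1)} ∈ 𝓝 (x.1 N) := by
      change ∀ᶠ u in 𝓝 (x.1 N), ∀ j ∈ Finset.range (N + 1),
        dist (T^[N - j] u) (x.1 j) < 1 / ((N : ℝ) + 1)
      rw [Filter.eventually_all_finset]
      intro j hj
      rw [Finset.mem_range] at hj
      have h1 := (hT.iterate (N - j)).tendsto (x.1 N)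
      have h2 := orb_iter x.2.2 j (N - j)
      rw [show j + (N - j) = N by omega] at h2
      rw [h2] at h1
      exact (Metric.tendsto_nhds.1 h1) _ (by positivity)
    obtain ⟨u, ⟨hu1, hu2⟩, hu3⟩ := accPt_iff_nhds.1 (hacc _ (hx N)) _ hnb
    obtain ⟨y, hy, hyN⟩ := invlim_of_right_inverse hΩK hmap hsurj hu2 N
    refine ⟨y, hy, ?_, ?_⟩
    · rintro rfl; exact hu3 hyN.symm
    · intro j hj
      have h2 := orb_iter y.2.2 j (N - j)
      rw [show j + (N - j) = N by omega, hyN] at h2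
      rw [← h2]
      exact hu1 j (Finset.mem_range.2 (by omega))
  choose y hyΩ hyx hyd using key
  have hlim : Tendsto y atTop (𝓝 x) := by
    rw [tendsto_subtype_rng, tendsto_pi_nhds]
    intro j
    rw [tendsto_iff_dist_tendsto_zero]
    refine squeeze_zero' (Eventually.of_forall fun _ => dist_nonneg) ?_
      tendsto_one_div_add_atTop_nhds_zero_nat
    filter_upwards [eventually_ge_atTop j] with N hN
    exact (hyd N j hN).le
  rw [accPt_iff_nhds]
  intro U hU
  obtain ⟨N, hN⟩ := (hlim.eventually hU).exists
  exact ⟨y N, ⟨hN, hyΩ N⟩, hyx N⟩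

/-- points of `F` are contained in no arc -/
lemma Ren.noarc (h : Ren T c p J Ω) (hJc : ∀ i k, IsCompact (J i k))
    (hF : Preperfect {x : InvLim T K | ∀ n, x.1 n ∈ Ω})
    {x : InvLim T K} (hx : ∀ n, x.1 n ∈ Ω) {A : Set (InvLim T K)} (hA : IsArc A) : x ∉ A := by
  intro hxA
  obtain ⟨f, hf, rfl⟩ := hA
  have hcp : IsCompact (range f) := isCompact_range hf.continuous
  have hcn : IsConnected (range f) := isConnected_range hf.continuous
  have h01 : f 0 ≠ f 1 := fun e => zero_ne_one (hf.injective e)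
  obtain ⟨y, hyA, hyx⟩ : ∃ y ∈ range f, y ≠ x := by
    by_cases e : f 0 = x
    · exact ⟨f 1, ⟨1, rfl⟩, fun e' => h01 (e.trans e'.symm)⟩
    · exact ⟨f 0, ⟨0, rfl⟩, e⟩
  obtain ⟨i, k, hk, hxk, hcont⟩ := h.contains (fun i => (hJc i 0).isBounded) hx hcp hcn hxA hyA hyx
  -- points of `F` on the arc are its ends
  have hends : ∀ w : InvLim T K, (∀ n, w.1 n ∈ Ω) → w ∈ range f → w = f 0 ∨ w = f 1 := by
    rintro w hw ⟨s, rfl⟩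
    have hen := h.endpoint hw (f '' Iic s) (f '' Ici s)
      ((isClosed_Iic.isCompact).image hf.continuous)
      (IsConnected.image ⟨nonempty_Iic, ordConnected_Iic.isPreconnected⟩ _
        hf.continuous.continuousOn)
      ((isClosed_Ici.isCompact).image hf.continuous)
      (IsConnected.image ⟨nonempty_Ici, ordConnected_Ici.isPreconnected⟩ _
        hf.continuous.continuousOn)
      ⟨s, self_mem_Iic, rfl⟩ ⟨s, self_mem_Ici, rfl⟩
    rcases hen with hen | hen
    · left
      have h0 : (0 : Icc (0:ℝ) 1) ≤ s := s.2.1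
      obtain ⟨r, hr, hrf⟩ := hen ⟨0, h0, rfl⟩
      rw [hf.injective hrf] at hr
      rw [le_antisymm hr h0]
    · right
      have h0 : s ≤ (1 : Icc (0:ℝ) 1) := s.2.2
      obtain ⟨r, hr, hrf⟩ := hen ⟨1, h0, rfl⟩
      rw [hf.injective hrf] at hr
      rw [le_antisymm h0 hr]
  -- a neighbourhood
  set V : Set ℝ := ⋃ l ∈ (Finset.range (p i)).filter (· ≠ k), J i l with hV
  have hVc : IsClosed V := by
    apply isClosed_biUnion_finset
    intro l _
    exact (hJc i l).isClosed
  have hxV : x.1 0 ∉ V := by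
    intro hmem
    simp only [hV, mem_iUnion, Finset.mem_filter, Finset.mem_range, exists_prop] at hmem
    obtain ⟨l, ⟨hl, hlk⟩, hxl⟩ := hmem
    exact hlk (h.disj i l hl k hk _ hxl hxk)
  have hnb : {w : InvLim T K | w.1 0 ∉ V} ∈ 𝓝 x := by
    have : IsOpen {w : InvLim T K | w.1 0 ∉ V} := by
      have hc0 : Continuous (fun w : InvLim T K => w.1 0) :=
        (continuous_apply 0).comp continuous_subtype_val
      exact hVc.isOpen_compl.preimage hc0
    exact this.mem_nhds hxV
  have hin : ∀ w : InvLim T K, w.1 0 ∉ V → (∀ n, w.1 n ∈ Ω) → w ∈ range f := by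
    intro w hwV hw
    refine hcont w hw ?_
    obtain ⟨l, hl, hwl⟩ := (h.mem _).1 (hw 0) i
    by_cases e : l = k
    · rwa [← e]
    · exact absurd (by
        simp only [hV, mem_iUnion, Finset.mem_filter, Finset.mem_range, exists_prop]
        exact ⟨l, ⟨hl, e⟩, hwl⟩) hwV
  obtain ⟨y1, ⟨hy1V, hy1Ω⟩, hy1x⟩ := accPt_iff_nhds.1 (hF x hx) _ hnb
  have hnb2 : {w : InvLim T K | w.1 0 ∉ V} ∩ {y1}ᶜ ∈ 𝓝 x :=
    inter_mem hnb (isOpen_compl_singleton.mem_nhds (fun e => hy1x e.symm))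
  obtain ⟨y2, ⟨⟨hy2V, hy21⟩, hy2Ω⟩, hy2x⟩ := accPt_iff_nhds.1 (hF x hx) _ hnb2
  have e0 := hends x hx hxA
  have e1 := hends y1 hy1Ω (hin y1 hy1V hy1Ω)
  have e2 := hends y2 hy2Ω (hin y2 hy2V hy2Ω)
  have hy21' : y2 ≠ y1 := hy21
  rcases e0 with e0 | e0 <;> rcases e1 with e1 | e1 <;> rcases e2 with e2 | e2 <;>
    first
      | exact hy1x (e1.trans e0.symm)
      | exact hy2x (e2.trans e0.symm)
      | exact hy21' (e2.trans e1.symm)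

end abstract

/-- iterated inverse branches of the logistic map -/
noncomputable def gbr (a : ℝ) (s : ℕ → ℝ) : ℕ → ℝ → ℝ
  | 0, t => t
  | k + 1, t => 1 / 2 + s k * Real.sqrt (1 / 4 - gbr a s k t / a)

lemma gbr_cont (a : ℝ) (s : ℕ → ℝ) (k : ℕ) : Continuous (gbr a s k) := by
  induction k with
  | zero => exact continuous_id
  | succ k ih =>
    change Continuous fun t => 1 / 2 + s k * Real.sqrt (1 / 4 - gbr a s k t / a)
    fun_prop

lemma exists_arc {a : ℝ} (ha : 0 < a) {T : ℝ → ℝ} (hT : ∀ x, T x = a * x * (1 - x)) {K : Set ℝ}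
    (hK : K = Icc (T^[2] (1 / 2)) (T (1 / 2))) (hKm : ∀ u ∈ K, T u ∈ K)
    (x : InvLim T K) {n : ℕ} (hn : x.1 n ∉ omegaSet T (1 / 2)) :
    ∃ A : Set (InvLim T K), IsArc A ∧ x ∈ A := by
  have hTc : Continuous T := by
    rw [show T = fun x => a * x * (1 - x) from funext hT]; fun_prop
  have hKmem : ∀ u, u ∈ K ↔ T^[2] (1 / 2) ≤ u ∧ u ≤ T (1 / 2) := by
    intro u; rw [hK]; exact Iff.rfl
  have hnc : ¬ MapClusterPt (x.1 n) atTop (fun k => T^[k] (1 / 2)) := by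
    intro hcl
    obtain ⟨ψ, hψ, hlim⟩ := hcl.tendsto_subseq
    exact hn ⟨ψ, hψ, hlim⟩
  rw [mapClusterPt_iff_frequently] at hnc
  push Not at hnc
  obtain ⟨U, hU, hUf⟩ := hnc
  obtain ⟨N, hN⟩ := eventually_atTop.1 hUf
  -- move to a coordinate where the whole critical orbit is avoided
  set m := n + N with hm
  have hU' : {u | T^[N] u ∈ U} ∈ 𝓝 (x.1 m) := by
    have h1 := (hTc.iterate N).tendsto (x.1 m)
    rw [hm, orb_iter x.2.2] at h1
    exact h1 hU
  have hav : ∀ u, T^[N] u ∈ U → ∀ k, T^[k] (1 / 2) ≠ u := by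
    rintro u hu k rfl
    rw [← Function.iterate_add_apply] at hu
    exact hN (N + k) (by omega) hu
  have hxm := mem_of_mem_nhds hU'
  have hKn : K ∈ 𝓝 (x.1 m) := by
    have h1 := x.2.1 m
    rw [hKmem] at h1
    refine mem_of_superset (Icc_mem_nhds (a := T^[2] (1 / 2)) (b := T (1 / 2)) ?_ ?_)
      (fun u hu => (hKmem u).2 hu)
    · exact lt_of_le_of_ne h1.1 (hav _ hxm 2)
    · exact lt_of_le_of_ne h1.2 (fun e => hav _ hxm 1 (by simpa using e.symm))
  obtain ⟨ε, hε, hball⟩ := Metric.nhds_basis_closedBall.mem_iff.1 (inter_mem hU' hKn)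
  set I := Icc (x.1 m - ε) (x.1 m + ε) with hI
  have hIsub : ∀ t ∈ I, T^[N] t ∈ U ∧ t ∈ K := by
    intro t ht
    rw [hI, ← Real.closedBall_eq_Icc] at ht
    exact hball ht
  set s : ℕ → ℝ := fun k => if x.1 (m + k + 1) ≤ 1 / 2 then -1 else 1 with hs
  have hs2 : ∀ k, s k * s k = 1 := by
    intro k; simp only [hs]; split_ifs <;> norm_num
  have hxmI : x.1 m ∈ I := ⟨by linarith, by linarith⟩
  have hgx : ∀ k, gbr a s k (x.1 m) = x.1 (m + k) := by
    intro k
    induction k with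
    | zero => rfl
    | succ k ih =>
      have e : 1 / 4 - x.1 (m + k) / a = (x.1 (m + k + 1) - 1 / 2) ^ 2 := by
        rw [← x.2.2 (m + k), hT]; field_simp; ring
      unfold gbr
      rw [ih, e, Real.sqrt_sq_eq_abs]
      simp only [hs]
      rw [← add_assoc]
      split_ifs with hle
      · rw [abs_of_nonpos (by linarith)]; ring
      · push Not at hle
        rw [abs_of_pos (by linarith)]; ring
  have hTg : ∀ k t, gbr a s k t ∈ K → T (gbr a s (k + 1) t) = gbr a s k t := by
    intro k t ht
    rw [hK] at ht
    have h2 : gbr a s k t ≤ a / 4 := by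
      have := ht.2
      rw [hT] at this; linarith
    have h3 : 0 ≤ 1 / 4 - gbr a s k t / a := by
      rw [sub_nonneg, div_le_iff₀ ha]; linarith
    rw [hT, show gbr a s (k + 1) t = 1 / 2 + s k * Real.sqrt (1 / 4 - gbr a s k t / a) from rfl]
    have h4 := Real.mul_self_sqrt h3
    set q := Real.sqrt (1 / 4 - gbr a s k t / a)
    have : a * (1 / 2 + s k * q) * (1 - (1 / 2 + s k * q)) =
        a * (1 / 4 - (s k * s k) * (q * q)) := by ring
    rw [this, hs2, h4]
    field_simp
    ring
  have hmain : ∀ k, ∀ t ∈ I, gbr a s k t ∈ K ∧ T^[k] (gbr a s k t) = t := by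
    intro k
    induction k with
    | zero => intro t ht; exact ⟨(hIsub t ht).2, rfl⟩
    | succ k ih =>
      have hit : ∀ t ∈ I, T^[k + 1] (gbr a s (k + 1) t) = t := by
        intro t ht
        rw [Function.iterate_succ_apply, hTg k t (ih t ht).1, (ih t ht).2]
      refine fun t ht => ⟨?_, hit t ht⟩
      have hoc : (gbr a s (k + 1) '' I).OrdConnected :=
        (isPreconnected_Icc.image _ (gbr_cont a s _).continuousOn).ordConnected
      have hnot : ∀ j, T^[j] (1 / 2) ∉ gbr a s (k + 1) '' I := by
        rintro j ⟨r, hr, he⟩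
        have h1 := hit r hr
        rw [he, ← Function.iterate_add_apply] at h1
        exact hav r (hIsub r hr).1 _ h1
      have hxI : x.1 (m + (k + 1)) ∈ gbr a s (k + 1) '' I := ⟨_, hxmI, hgx _⟩
      have hgI : gbr a s (k + 1) t ∈ gbr a s (k + 1) '' I := ⟨t, ht, rfl⟩
      have hxK := x.2.1 (m + (k + 1))
      rw [hKmem] at hxK ⊢
      constructor
      · by_contra hcon
        push Not at hcon
        exact hnot 2 (hoc.out hgI hxI ⟨hcon.le, hxK.1⟩)
      · by_contra hcon
        push Not at hcon
        refine hnot 1 ?_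
        rw [Function.iterate_one]
        exact hoc.out hxI hgI ⟨hxK.2, hcon.le⟩
  have hKit : ∀ j, ∀ u ∈ K, T^[j] u ∈ K := by
    intro j
    induction j with
    | zero => intro u hu; exact hu
    | succ j ih => intro u hu; rw [Function.iterate_succ_apply']; exact hKm _ (ih u hu)
  set τ : Icc (0:ℝ) 1 → ℝ := fun t => x.1 m - ε + t.1 * (2 * ε) with hτ
  have hτI : ∀ t, τ t ∈ I := by
    intro t
    have h0 := t.2.1
    have h1 := t.2.2
    simp only [hτ, hI]
    constructor <;> nlinarith
  set f : Icc (0:ℝ) 1 → InvLim T K := fun t =>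
    ⟨fun j => T^[m] (gbr a s j (τ t)), fun j => hKit _ _ (hmain j _ (hτI t)).1, fun j => by
      rw [← Function.iterate_succ_apply' T, Function.iterate_succ_apply T,
        hTg j _ (hmain j _ (hτI t)).1]⟩ with hf
  have hτc : Continuous τ := by simp only [hτ]; fun_prop
  have hfc : Continuous f := by
    apply Continuous.subtype_mk
    apply continuous_pi
    intro j
    exact (hTc.iterate m).comp ((gbr_cont a s j).comp hτc)
  have hfi : Function.Injective f := by
    intro t r htr
    have h1 : (f t).1 m = (f r).1 m := by rw [htr]
    simp only [hf] at h1
    rw [(hmain m _ (hτI t)).2, (hmain m _ (hτI r)).2] at h1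
    simp only [hτ] at h1
    have h2 : (t.1 - r.1) * (2 * ε) = 0 := by linarith
    rcases mul_eq_zero.1 h2 with h3 | h3
    · exact Subtype.ext (by linarith)
    · linarith
  refine ⟨range f, ⟨f, (hfc.isClosedEmbedding hfi).isEmbedding, rfl⟩, ?_⟩
  refine ⟨⟨1 / 2, by norm_num, by norm_num⟩, ?_⟩
  apply Subtype.ext
  funext j
  have e : τ ⟨1 / 2, by norm_num, by norm_num⟩ = x.1 m := by simp only [hτ]; ring
  simp only [hf]
  rw [e, hgx, add_comm m j, orb_iter x.2.2]

end Stmt17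

/-- If `T = Q_a` is an infinitely renormalisable logistic map (with
nested cycles `J i k`, `k < p i`, of `p i`-periodic intervals around `c`, periods
strictly increasing and dividing one another, whose intersection is the Cantor set
`ω(c)`), then the set `F` of folding points of the core inverse limit `X′` is a Cantor
set (nonempty, perfect and totally disconnected) consisting entirely of nasty
endpoints: `F = E_N`; in particular every point of `X′` outside this Cantor set is not
a folding point. -/
theorem stmt17 (a : ℝ) (ha : a ∈ Set.Icc (3:ℝ) 4) (T : ℝ → ℝ)
    (hT : ∀ x, T x = a * x * (1 - x)) (c : ℝ) (hc : c = 1/2)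
    (p : ℕ → ℕ) (J : ℕ → ℕ → Set ℝ)
    (hp1 : ∀ i, 2 ≤ p i) (hpdvd : ∀ i, p i ∣ p (i + 1)) (hplt : ∀ i, p i < p (i + 1))
    (hJc : ∀ i, c ∈ J i 0)
    (hJint : ∀ i k, (J i k).OrdConnected ∧ IsCompact (J i k) ∧ (J i k).Nonempty)
    (hJmap : ∀ i, ∀ k < p i, T '' J i k ⊆ J i ((k + 1) % p i))
    (hJdisj : ∀ i, ∀ k < p i, ∀ l < p i, k ≠ l → Disjoint (J i k) (J i l))
    (hnest : ∀ i, (⋃ k ∈ Finset.range (p (i + 1)), J (i + 1) k) ⊆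
      ⋃ k ∈ Finset.range (p i), J i k)
    (hdiam : Filter.Tendsto
      (fun i => ⨆ k ∈ Finset.range (p i), Metric.diam (J i k)) Filter.atTop (nhds 0))
    (homega : omegaSet T c = ⋂ i, ⋃ k ∈ Finset.range (p i), J i k)
    (hCantor : Perfect (omegaSet T c) ∧ IsTotallyDisconnected (omegaSet T c))
    (K : Set ℝ) (hK : K = Set.Icc (T^[2] c) (T c))
    (F EN : Set (InvLim T K))
    (hF : F = {x : InvLim T K | ∀ n, x.1 n ∈ omegaSet T c})
    (hEN : EN = {x : InvLim T K | IsEndpointPt x ∧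
      ∀ A : Set (InvLim T K), IsArc A → x ∉ A}) :
    F = EN ∧ F.Nonempty ∧ Perfect F ∧ IsTotallyDisconnected F := by
  subst hc
  have ha0 : 0 < a := by linarith [ha.1]
  have hTc : Continuous T := by
    rw [show T = fun x => a * x * (1 - x) from funext hT]; fun_prop
  set Ω := omegaSet T (1 / 2) with hΩ
  have hmem : ∀ u, u ∈ Ω ↔ ∀ i, ∃ k < p i, u ∈ J i k := by
    intro u
    rw [homega]
    simp only [mem_iInter, mem_iUnion, Finset.mem_range, exists_prop]
  have hren : Stmt17.Ren T (1 / 2) p J Ω := by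
    refine ⟨hTc, ?_, ?_, ?_, hp1, ?_, hJc, fun i k => (hJint i k).1, ?_, ?_, ?_, hmem,
      hCantor.1.closed⟩
    · intro x; rw [hT, hT]; nlinarith [mul_nonneg ha0.le (sq_nonneg (x - 1 / 2))]
    · intro u hu v hv huv
      simp only [mem_Iic] at hu hv
      rw [hT, hT]
      have : 0 < a * ((v - u) * (1 - u - v)) :=
        mul_pos ha0 (mul_pos (by linarith) (by linarith))
      nlinarith
    · intro u hu v hv huv
      simp only [mem_Ici] at hu hv
      rw [hT, hT]
      have : 0 < a * ((v - u) * (u + v - 1)) :=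
        mul_pos ha0 (mul_pos (by linarith) (by linarith))
      nlinarith
    · intro i
      induction i with
      | zero => have := hp1 0; omega
      | succ i ih => have := hplt i; omega
    · intro i k hk u hu
      exact hJmap i k hk ⟨u, hu, rfl⟩
    · intro i k hk l hl u hu hu'
      by_contra hne
      exact Set.disjoint_left.1 (hJdisj i k hk l hl hne) hu hu'
    · intro ε hε
      filter_upwards [hdiam.eventually (gt_mem_nhds hε)] with i hi k hk u hu v hv
      refine lt_of_le_of_lt ?_ hi
      refine (Metric.dist_le_diam_of_mem (hJint i k).2.1.isBounded hu hv).trans ?_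
      have hb : BddAbove (range fun k => ⨆ _ : k ∈ Finset.range (p i), Metric.diam (J i k)) := by
        refine ⟨∑ l ∈ Finset.range (p i), Metric.diam (J i l), ?_⟩
        rintro _ ⟨l, rfl⟩
        refine Real.iSup_le (fun hl => ?_) (Finset.sum_nonneg fun _ _ => Metric.diam_nonneg)
        exact Finset.single_le_sum (f := fun l => Metric.diam (J i l))
          (fun _ _ => Metric.diam_nonneg) hl
      have h1 := le_ciSup hb k
      have hk' : k ∈ Finset.range (p i) := Finset.mem_range.2 hk
      have h2 : (⨆ _ : k ∈ Finset.range (p i), Metric.diam (J i k)) = Metric.diam (J i k) :=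
        ciSup_pos hk'
      rw [← h2]
      exact h1
  have hKm : ∀ u ∈ K, T u ∈ K := by
    intro u hu
    rw [hK] at hu ⊢
    obtain ⟨hu1, hu2⟩ := hu
    refine ⟨?_, hren.max u⟩
    rcases le_total u (1 / 2) with h | h
    · have h1 : T (T^[2] (1 / 2)) ≤ T u := hren.mono.monotoneOn (hu1.trans h) h hu1
      refine le_trans ?_ h1
      simp only [Function.iterate_succ, Function.iterate_zero, Function.comp, id] at *
      set y := T (T (1 / 2)) with hy
      have ey : y = a ^ 2 * (4 - a) / 16 := by rw [hy, hT, hT]; ring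
      have hy0 : 0 ≤ y := by
        rw [ey]
        have := ha.2
        have h4 : 0 ≤ 4 - a := by linarith
        positivity
      have hy1 : a * y ≤ a - 1 := by
        have h5 : 0 ≤ (a - 2) ^ 3 * (a + 2) := by
          have := ha.1
          have : 0 ≤ a - 2 := by linarith
          positivity
        rw [ey]; nlinarith
      rw [hT y]
      nlinarith
    · exact hren.anti.antitoneOn h (h.trans hu2) hu2
  have horb : ∀ n, T^[n + 1] (1 / 2) ∈ K := by
    intro n
    induction n with
    | zero =>
      rw [hK]
      refine ⟨?_, le_rfl⟩
      exact hren.max _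
    | succ n ih => rw [Function.iterate_succ_apply']; exact hKm _ ih
  have hKcl : IsClosed K := by rw [hK]; exact isClosed_Icc
  have hKcp : IsCompact K := by rw [hK]; exact isCompact_Icc
  have hΩK : Ω ⊆ K := by
    rintro u ⟨φ, hφ, hlim⟩
    refine hKcl.mem_of_tendsto hlim ?_
    filter_upwards [eventually_ge_atTop 1] with n hn
    have h1 : n ≤ φ n := hφ.id_le n
    obtain ⟨m, hm⟩ : ∃ m, φ n = m + 1 := ⟨φ n - 1, by omega⟩
    rw [hm]; exact horb m
  have hmap : ∀ u ∈ Ω, T u ∈ Ω := fun u hu => hren.mapsΩ hu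
  have hsurj : ∀ u ∈ Ω, ∃ v ∈ Ω, T v = u := by
    rintro u ⟨φ, hφ, hlim⟩
    have hge : ∀ n, n + 2 ≤ φ (n + 2) := fun n => hφ.id_le _
    have hin : ∀ n, T^[φ (n + 2) - 1] (1 / 2) ∈ K := by
      intro n
      have := hge n
      rw [show φ (n + 2) - 1 = (φ (n + 2) - 2) + 1 by omega]
      exact horb _
    obtain ⟨v, hv, ψ, hψ, hvl⟩ := hKcp.tendsto_subseq hin
    refine ⟨v, ⟨fun n => φ (ψ n + 2) - 1, ?_, hvl⟩, ?_⟩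
    · intro m n hmn
      have h1 := hφ (show ψ m + 2 < ψ n + 2 by have := hψ hmn; omega)
      have h2 := hge (ψ m)
      change φ (ψ m + 2) - 1 < φ (ψ n + 2) - 1
      omega
    · have h1 := (hTc.tendsto v).comp hvl
      have h2 : Tendsto (fun n => T^[φ (ψ n + 2)] (1 / 2)) atTop (𝓝 u) :=
        hlim.comp ((tendsto_add_atTop_nat 2).comp hψ.tendsto_atTop)
      refine tendsto_nhds_unique h1 (h2.congr ?_)
      intro n
      have := hge (ψ n)
      simp only [Function.comp]
      rw [← Function.iterate_succ_apply' T]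
      congr 2
      omega
  have hpre := Stmt17.preperfect_F (K := K) hTc hΩK hmap hsurj hCantor.1.acc
  refine ⟨?_, ?_, ?_, ?_⟩
  · rw [hF, hEN]
    apply Subset.antisymm
    · intro x hx
      exact ⟨hren.endpoint hx, fun A hA =>
        hren.noarc (fun i k => (hJint i k).2.1) hpre hx hA⟩
    · rintro x ⟨-, hx⟩
      by_contra hcon
      simp only [mem_ofPred_eq, not_forall] at hcon
      obtain ⟨n, hn⟩ := hcon
      obtain ⟨A, hA, hxA⟩ := Stmt17.exists_arc ha0 hT hK hKm x hn
      exact hx A hA hxA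
  · have hc0 : (1 / 2 : ℝ) ∈ Ω :=
      (hmem _).2 fun i => ⟨0, by have := hp1 i; omega, hJc i⟩
    obtain ⟨y, hy, -⟩ := Stmt17.invlim_of_right_inverse hΩK hmap hsurj hc0 0
    exact ⟨y, by rw [hF]; exact hy⟩
  · rw [hF]
    refine ⟨?_, hpre⟩
    rw [ofPred_forall]
    exact isClosed_iInter fun n =>
      hCantor.1.closed.preimage ((continuous_apply n).comp continuous_subtype_val)
  · intro t ht htc u hu v hv
    apply Subtype.ext
    funext n
    have himg : IsPreconnected ((fun z : InvLim T K => z.1 n) '' t) :=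
      htc.image _ ((continuous_apply n).comp continuous_subtype_val).continuousOn
    refine hCantor.2 _ ?_ himg ⟨u, hu, rfl⟩ ⟨v, hv, rfl⟩
    rintro _ ⟨z, hz, rfl⟩
    have := ht hz
    rw [hF] at this
    exact this n
end
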